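/- arXiv:1011.5707 — 2 statements merged into one kernel-verified Lean document; each statement's English description precedes it below -/
import Mathlib

section
/- Let n ≥ 2 be an integer. Every homotopy class in π_n(ℋ_n, 0) is represented by a standard n-loop, i.e. for every γ ∈ π_n(ℋ_n, 0) there exists a continuous map h : [0,1]^n → ℋ_n with h(∂([0,1]^n)) = {0}, whose homotopy class rel ∂([0,1]^n) is γ, and such that h(J_i^n) ⊆ S_i^n for every i ≥ 1, where J_i^n = [1 − 2^{−(i−1)}, 1 − 2^{−i}] × [0,1]^{n−1}. -/
open scoped Topology Topology.Homotopy unitInterval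

noncomputable section

/-- The `n`-sphere of radius `1/j` centered at `(1/j, 0, …, 0)` in `ℝ^{n+1}`
(it passes through the origin). -/
def hawSphere (n j : ℕ) : Set (EuclideanSpace ℝ (Fin (n+1))) :=
  Metric.sphere (EuclideanSpace.single (0 : Fin (n+1)) ((1 : ℝ)/j)) (1/j)

/-- The `n`-dimensional Hawaiian earring: the union of the spheres `hawSphere n j`, `j ≥ 1`. -/
def hawaiian (n : ℕ) : Set (EuclideanSpace ℝ (Fin (n+1))) :=
  ⋃ j ∈ {j : ℕ | 1 ≤ j}, hawSphere n j

/-- The union `Y_i^{(n)}` of the first `i` spheres of the `n`-dimensional Hawaiian earring. -/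
def Ysub (n i : ℕ) : Set (EuclideanSpace ℝ (Fin (n+1))) :=
  ⋃ j ∈ Finset.Icc 1 i, hawSphere n j

lemma zero_mem_hawSphere (n j : ℕ) : (0 : EuclideanSpace ℝ (Fin (n+1))) ∈ hawSphere n j := by
  have : dist (0 : EuclideanSpace ℝ (Fin (n+1)))
      (EuclideanSpace.single (0 : Fin (n+1)) ((1 : ℝ)/j)) = 1/j := by
    rw [dist_zero_left, EuclideanSpace.norm_single, Real.norm_eq_abs,
      abs_of_nonneg (one_div_nonneg.mpr (Nat.cast_nonneg j))]
  exact Metric.mem_sphere.mpr this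

lemma zero_mem_hawaiian (n : ℕ) : (0 : EuclideanSpace ℝ (Fin (n+1))) ∈ hawaiian n :=
  Set.mem_biUnion (by simp : (1 : ℕ) ∈ {j : ℕ | 1 ≤ j}) (zero_mem_hawSphere n 1)

lemma zero_mem_Ysub (n i : ℕ) : (0 : EuclideanSpace ℝ (Fin (n+1))) ∈ Ysub n (i+1) :=
  Set.mem_biUnion (by simp : (1 : ℕ) ∈ Finset.Icc 1 (i+1)) (zero_mem_hawSphere n 1)

/-- The basepoint (the origin) of the Hawaiian earring. -/
def hawaiianPt (n : ℕ) : ↥(hawaiian n) := ⟨0, zero_mem_hawaiian n⟩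

/-- The basepoint (the origin) of `Y_{i+1}^{(n)}`. -/
def YsubPt (n i : ℕ) : ↥(Ysub n (i+1)) := ⟨0, zero_mem_Ysub n i⟩

namespace HawProof

abbrev EE (n : ℕ) := EuclideanSpace ℝ (Fin (n+1))

/-- Tail of the earring: spheres of index at least `j`. -/
def XX (n j : ℕ) : Set (EE n) := ⋃ i ∈ {i : ℕ | j ≤ i}, hawSphere n i

/-- Inversion. -/
def hinv {n : ℕ} (x : EE n) : EE n := (2 / ‖x‖ ^ 2) • x

lemma hinv_zero {n : ℕ} : hinv (0 : EE n) = 0 := by simp [hinv]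

lemma norm_hinv {n : ℕ} (x : EE n) : ‖hinv x‖ = 2 / ‖x‖ := by
  rcases eq_or_ne x 0 with rfl | hx
  · simp [hinv]
  · have : ‖x‖ ≠ 0 := norm_ne_zero_iff.2 hx
    rw [hinv, norm_smul, Real.norm_of_nonneg (by positivity)]
    field_simp

lemma hinv_hinv {n : ℕ} (x : EE n) : hinv (hinv x) = x := by
  rcases eq_or_ne x 0 with rfl | hx
  · simp [hinv]
  · have : ‖x‖ ≠ 0 := norm_ne_zero_iff.2 hx
    conv_lhs => rw [hinv, norm_hinv, hinv, smul_smul]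
    have : 2 / (2 / ‖x‖) ^ 2 * (2 / ‖x‖ ^ 2) = 1 := by field_simp
    rw [this, one_smul]

lemma hinv_ne_zero {n : ℕ} {x : EE n} (hx : x ≠ 0) : hinv x ≠ 0 := by
  intro h; apply hx; rw [← hinv_hinv x, h, hinv_zero]

lemma hinv_apply {n : ℕ} (x : EE n) (k) : hinv x k = 2 / ‖x‖ ^ 2 * x k := by
  simp [hinv]

lemma abs_apply_le {n : ℕ} (x : EE n) (k) : |x k| ≤ ‖x‖ := by
  simpa using PiLp.norm_apply_le x k

lemma continuousAt_hinv {n : ℕ} {x : EE n} (hx : x ≠ 0) : ContinuousAt hinv x := by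
  have : ‖x‖ ^ 2 ≠ 0 := by simpa using hx
  unfold hinv
  fun_prop (disch := assumption)

lemma mem_sphere_iff' {n i : ℕ} (hi : 1 ≤ i) (x : EE n) :
    x ∈ hawSphere n i ↔ ‖x‖ ^ 2 * i = 2 * x 0 := by
  have hi' : (0:ℝ) < i := by exact_mod_cast hi
  have h1 : ‖x - EuclideanSpace.single (0 : Fin (n+1)) ((1 : ℝ)/i)‖ ^ 2
      = ‖x‖ ^ 2 - 2 * (x 0 * (1 / i)) + (1 / i) ^ 2 := by
    rw [norm_sub_sq_real]
    congr 1
    · congr 2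
      simp [EuclideanSpace.inner_single_right, mul_comm]
    · simp
  rw [hawSphere, mem_sphere_iff_norm, ← sq_eq_sq₀ (norm_nonneg _) (by positivity), h1]
  constructor
  · intro h
    field_simp at h
    have h2 : (i:ℝ) * (‖x‖ ^ 2 * i - 2 * x 0) = 0 := by linarith
    have := (mul_eq_zero.1 h2).resolve_left hi'.ne'
    linarith
  · intro h
    have h2 : ‖x‖ ^ 2 * i - 2 * x 0 = 0 := by linarith
    field_simp
    rw [h2]; ring

lemma mem_sphere_iff {n i : ℕ} (hi : 1 ≤ i) (x : EE n) :
    x ∈ hawSphere n i ↔ x = 0 ∨ hinv x 0 = i := by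
  rw [mem_sphere_iff' hi]
  rcases eq_or_ne x 0 with rfl | hx
  · simp
  · have : ‖x‖ ≠ 0 := norm_ne_zero_iff.2 hx
    simp only [hx, false_or, hinv_apply]
    constructor
    · intro h
      field_simp; linarith
    · intro h
      rw [← h]; field_simp

lemma mem_XX {n j : ℕ} (x : EE n) : x ∈ XX n j ↔ ∃ i, j ≤ i ∧ x ∈ hawSphere n i := by
  simp [XX]

lemma zero_mem_XX (n j : ℕ) : (0 : EE n) ∈ XX n j :=
  (mem_XX _).2 ⟨j, le_rfl, zero_mem_hawSphere n j⟩

lemma XX_mono {n j k : ℕ} (h : j ≤ k) : XX n k ⊆ XX n j := by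
  intro x hx
  obtain ⟨i, hi, h'⟩ := (mem_XX _).1 hx
  exact (mem_XX _).2 ⟨i, h.trans hi, h'⟩

lemma sphere_subset_XX (n j : ℕ) : hawSphere n j ⊆ XX n j := fun _ hx =>
  (mem_XX _).2 ⟨j, le_rfl, hx⟩

lemma mem_XX_iff {n j : ℕ} (hj : 1 ≤ j) (x : EE n) :
    x ∈ XX n j ↔ x = 0 ∨ ∃ i : ℕ, j ≤ i ∧ hinv x 0 = i := by
  rw [mem_XX]
  constructor
  · rintro ⟨i, hi, h⟩
    rcases (mem_sphere_iff (hj.trans hi) x).1 h with h | h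
    · exact Or.inl h
    · exact Or.inr ⟨i, hi, h⟩
  · rintro (h | ⟨i, hi, h⟩)
    · exact ⟨j, le_rfl, h ▸ zero_mem_hawSphere n j⟩
    · exact ⟨i, hi, (mem_sphere_iff (hj.trans hi) x).2 (Or.inr h)⟩

lemma norm_le_of_mem_XX {n j : ℕ} (hj : 1 ≤ j) {x : EE n} (hx : x ∈ XX n j) : ‖x‖ ≤ 2 / j := by
  have hj' : (0:ℝ) < j := by exact_mod_cast hj
  rcases (mem_XX_iff hj x).1 hx with rfl | ⟨i, hi, h⟩
  · simp only [norm_zero]; positivity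
  · have hi' : (j:ℝ) ≤ i := by exact_mod_cast hi
    have h1 := abs_apply_le (hinv x) 0
    rw [h, norm_hinv, Nat.abs_cast] at h1
    have hx0 : 0 < ‖x‖ := by
      rcases (norm_nonneg x).lt_or_eq with h2 | h2
      · exact h2
      · rw [← h2] at h1; simp at h1; linarith
    rw [le_div_iff₀ hx0] at h1
    rw [le_div_iff₀ hj']
    nlinarith

lemma isClosed_XX {n j : ℕ} (hj : 1 ≤ j) : IsClosed (XX n j) := by
  rw [← isOpen_compl_iff, isOpen_iff_mem_nhds]
  intro x hx
  have hx0 : x ≠ 0 := by rintro rfl; exact hx (zero_mem_XX n j)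
  have hcl : IsClosed ((fun i : ℕ => (i : ℝ)) '' {i | j ≤ i}) :=
    Nat.isClosedEmbedding_coe_real.isClosedMap _ (isClosed_discrete _)
  have hnot : hinv x 0 ∈ ((fun i : ℕ => (i : ℝ)) '' {i | j ≤ i})ᶜ := by
    rintro ⟨i, hi, h⟩
    exact hx ((mem_XX_iff hj x).2 (Or.inr ⟨i, hi, h.symm⟩))
  have hc : ContinuousAt (fun y : EE n => hinv y 0) x := by
    have : Continuous (fun y : EE n => y 0) := by fun_prop
    exact this.continuousAt.comp (continuousAt_hinv hx0)
  filter_upwards [hc (hcl.isOpen_compl.mem_nhds hnot), isOpen_ne.mem_nhds hx0] with y hy hy0 hyX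
  rcases (mem_XX_iff hj y).1 hyX with h | ⟨i, hi, h⟩
  · exact hy0 h
  · exact hy ⟨i, hi, h.symm⟩

def chi (r : ℝ) : ℝ := max 0 (min 1 (3 - r))

lemma chi_nonneg (r : ℝ) : 0 ≤ chi r := le_max_left _ _
lemma chi_le_one (r : ℝ) : chi r ≤ 1 := max_le zero_le_one (min_le_left _ _)
lemma chi_eq_one {r : ℝ} (h : r ≤ 2) : chi r = 1 := by
  rw [chi, min_eq_left (by linarith), max_eq_right zero_le_one]
lemma chi_eq_zero {r : ℝ} (h : 3 ≤ r) : chi r = 0 := by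
  rw [chi, max_eq_left]; exact (min_le_right _ _).trans (by linarith)
lemma continuous_chi : Continuous chi := by unfold chi; fun_prop

def ctr (n i : ℕ) : EE n := EuclideanSpace.single 0 (i : ℝ)

lemma norm_ctr (n i : ℕ) : ‖ctr n i‖ = i := by simp [ctr]
lemma ctr_apply (n i : ℕ) : ctr n i 0 = i := by simp [ctr]

/-- pushed point in inverted coordinates -/
def yy {n : ℕ} (i : ℕ) (s : ℝ) (F p : EE n) : EE n := F + (s * chi ‖F - ctr n i‖) • (p - F)

def lam {n : ℕ} (q : EE n) (δ s : ℝ) (y : EE n) : ℝ := max 0 (1 - s * ‖y - q‖ / δ)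

def ww {n : ℕ} (q : EE n) (δ s : ℝ) (y : EE n) : EE n := lam q δ s y • q + (y - q)

/-- expansion around `q` -/
def ex {n : ℕ} (q : EE n) (δ s : ℝ) (y : EE n) : EE n :=
  (2 * lam q δ s y / ‖ww q δ s y‖ ^ 2) • ww q δ s y

lemma lam_nonneg {n : ℕ} (q : EE n) (δ s : ℝ) (y : EE n) : 0 ≤ lam q δ s y := le_max_left _ _

lemma lam_le_one {n : ℕ} (q : EE n) {δ s : ℝ} (hδ : 0 < δ) (hs : 0 ≤ s) (y : EE n) :
    lam q δ s y ≤ 1 := by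
  refine max_le zero_le_one ?_
  have : 0 ≤ s * ‖y - q‖ / δ := by positivity
  linarith

lemma yy_apply_zero {n i : ℕ} (s : ℝ) {F p : EE n} (hF : F 0 = i) (hp : p 0 = i) :
    yy i s F p 0 = i := by
  simp [yy, hF, hp]

lemma yy_sub_norm {n i : ℕ} {s : ℝ} (hs : 0 ≤ s) (hs1 : s ≤ 1) {F p : EE n}
    (h : ‖F - ctr n i‖ ≤ 3 → ‖p - F‖ ≤ 1) : ‖yy i s F p - F‖ ≤ 1 := by
  have h0 := chi_nonneg ‖F - ctr n i‖
  have h1 := chi_le_one ‖F - ctr n i‖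
  rw [yy, add_sub_cancel_left, norm_smul, Real.norm_of_nonneg (by positivity)]
  by_cases h3 : ‖F - ctr n i‖ ≤ 3
  · have := h h3
    have h4 : s * chi ‖F - ctr n i‖ ≤ 1 := mul_le_one₀ hs1 h0 h1
    exact mul_le_one₀ h4 (norm_nonneg _) this
  · rw [chi_eq_zero (by linarith)]; simp

lemma ww_apply_zero {n i : ℕ} {q y : EE n} (δ s : ℝ) (hq : q 0 = i) (hy : y 0 = i) :
    ww q δ s y 0 = lam q δ s y * i := by
  simp [ww, hq, hy]

lemma ww_ne_zero {n i : ℕ} (hi : 1 ≤ i) {q y : EE n} (δ s : ℝ) (hq : q 0 = i) (hy : y 0 = i) :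
    ww q δ s y ≠ 0 := by
  intro h
  have h1 := ww_apply_zero δ s hq hy
  rw [h] at h1
  have hi' : (i : ℝ) ≠ 0 := by exact_mod_cast (by omega : i ≠ 0)
  have h2 : lam q δ s y = 0 := by
    rcases mul_eq_zero.1 h1.symm with h | h
    · exact h
    · exact absurd h hi'
  rw [ww, h2, zero_smul, zero_add] at h
  rw [lam, h] at h2
  simp at h2

lemma ex_mem {n i : ℕ} (hi : 1 ≤ i) {q y : EE n} (δ s : ℝ) (hq : q 0 = i) (hy : y 0 = i) :
    ex q δ s y ∈ hawSphere n i := by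
  rw [mem_sphere_iff' hi]
  have h0 := ww_ne_zero hi δ s hq hy
  have h1 : ‖ww q δ s y‖ ≠ 0 := norm_ne_zero_iff.2 h0
  have h2 := ww_apply_zero δ s hq hy
  have h3 := lam_nonneg q δ s y
  rw [ex, norm_smul, Real.norm_of_nonneg (by positivity), PiLp.smul_apply, h2, smul_eq_mul]
  field_simp

lemma ex_zero {n : ℕ} (q y : EE n) (δ : ℝ) : ex q δ 0 y = hinv y := by
  have : lam q δ 0 y = 1 := by simp [lam]
  simp [ex, ww, this, hinv]

lemma ex_norm {n i : ℕ} (hi : 1 ≤ i) {q y F : EE n} {δ s : ℝ} (hδ : 0 < δ) (hs : 0 ≤ s)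
    (hq : q 0 = i) (hy : y 0 = i) (hqc : ‖q - ctr n i‖ ≤ 1 / 2) (hyF : ‖y - F‖ ≤ 1)
    (hF : F ≠ 0) : ‖ex q δ s y‖ ≤ 5 * ‖hinv F‖ := by
  have hi' : (1:ℝ) ≤ i := by exact_mod_cast hi
  have h0 := ww_ne_zero hi δ s hq hy
  have h1 : 0 < ‖ww q δ s y‖ := norm_pos_iff.2 h0
  have hF' : 0 < ‖F‖ := norm_pos_iff.2 hF
  have h2 := ww_apply_zero δ s hq hy
  have h3 := lam_nonneg q δ s y
  have h4 := lam_le_one q hδ hs y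
  have h5 : lam q δ s y * i ≤ ‖ww q δ s y‖ := by
    rw [← h2]; exact (le_abs_self _).trans (abs_apply_le _ _)
  have hqn : ‖q‖ ≤ i + 1 / 2 := by
    have := norm_add_le (q - ctr n i) (ctr n i)
    rw [sub_add_cancel, norm_ctr] at this
    linarith
  have h6 : ‖y - q‖ ≤ ‖ww q δ s y‖ + lam q δ s y * ‖q‖ := by
    have := norm_sub_le (ww q δ s y) (lam q δ s y • q)
    rw [norm_smul, Real.norm_of_nonneg h3] at this
    simpa [ww] using this
  have h7 : ‖F‖ ≤ ‖y - q‖ + ‖q‖ + 1 := by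
    have a1 := norm_sub_le y (y - F)
    have a2 := norm_add_le (y - q) q
    rw [sub_add_cancel] at a2
    rw [sub_sub_cancel] at a1
    linarith
  set l := lam q δ s y
  set W := ‖ww q δ s y‖
  have h8 : l * ‖F‖ ≤ 5 * W := by
    have b1 : l * ‖F‖ ≤ l * (‖y - q‖ + ‖q‖ + 1) := by gcongr
    have b2 : l * ‖y - q‖ ≤ ‖y - q‖ := mul_le_of_le_one_left (norm_nonneg _) h4
    have b3 : l * ‖q‖ ≤ l * (i + 1 / 2) := by gcongr
    have b4 : l ≤ l * i := le_mul_of_one_le_right h3 hi'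
    nlinarith
  have h9 : ‖ex q δ s y‖ = 2 * l / W := by
    rw [ex, norm_smul, Real.norm_of_nonneg (by positivity)]
    change 2 * l / W ^ 2 * W = 2 * l / W
    field_simp
  rw [h9, norm_hinv, div_le_iff₀ h1]
  have : 5 * (2 / ‖F‖) * W = (5 * W) * 2 / ‖F‖ := by ring
  rw [this, le_div_iff₀ hF']
  nlinarith

lemma ex_one_ne {n : ℕ} {q y : EE n} {δ : ℝ} (hδ : 0 < δ) (h : ex q δ 1 y ≠ 0) :
    ‖y - q‖ < δ := by
  by_contra hc
  push Not at hc
  apply h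
  have : lam q δ 1 y = 0 := by
    rw [lam, max_eq_left]
    have : 1 ≤ 1 * ‖y - q‖ / δ := by rw [le_div_iff₀ hδ]; linarith
    linarith
  simp [ex, this]

theorem deform {n j : ℕ} (hj : 1 ≤ j) {T : Type*} [TopologicalSpace T] (f : T → EE n)
    (hf : Continuous f) (hfX : ∀ t, f t ∈ XX n j)
    (P : ℕ → T → EE n) (hP : ∀ i, Continuous (P i)) (hP0 : ∀ i t, P i t 0 = i)
    (hPf : ∀ (i : ℕ) t, f t ≠ 0 → hinv (f t) 0 = i → ‖hinv (f t) - ctr n i‖ ≤ 3 →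
      ‖P i t - hinv (f t)‖ ≤ 1)
    (q : ℕ → EE n) (hq0 : ∀ i, q i 0 = i) (hq : ∀ i, ‖q i - ctr n i‖ ≤ 1 / 2)
    (δ : ℕ → ℝ) (hδ : ∀ i, 0 < δ i) (hδ2 : ∀ i, δ i ≤ 1 / 2) :
    ∃ H : I × T → EE n, Continuous H ∧ (∀ t, H (0, t) = f t) ∧
      (∀ s t, f t = 0 → H (s, t) = 0) ∧
      (∀ s t i, j ≤ i → f t ∈ hawSphere n i → H (s, t) ∈ hawSphere n i) ∧
      (∀ t, H (1, t) ≠ 0 → f t ≠ 0 ∧ ∀ i : ℕ, hinv (f t) 0 = i →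
        ‖hinv (f t) - ctr n i‖ ≤ 2 ∧ ‖P i t - q i‖ < δ i) := by
  classical
  let G : ℕ → I × T → EE n := fun i z =>
    ex (q i) (δ i) z.1 (yy i z.1 (hinv (f z.2)) (P i z.2))
  let H : I × T → EE n := fun z => if f z.2 = 0 then 0 else G ⌊hinv (f z.2) 0⌋₊ z
  have hH : ∀ z (i : ℕ), f z.2 ≠ 0 → hinv (f z.2) 0 = i → H z = G i z := by
    intro z i h0 hi
    simp only [H, h0, if_false, hi, Nat.floor_natCast]
  have hidx : ∀ t, f t ≠ 0 → ∃ i : ℕ, j ≤ i ∧ hinv (f t) 0 = i := fun t ht =>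
    ((mem_XX_iff hj _).1 (hfX t)).resolve_left ht
  have hbd : ∀ z, ‖H z‖ ≤ 5 * ‖f z.2‖ := by
    intro z
    by_cases h0 : f z.2 = 0
    · simp [H, h0]
    · obtain ⟨i, hi, h⟩ := hidx _ h0
      rw [hH z i h0 h]
      have := ex_norm (hj.trans hi) (q := q i) (y := yy i z.1 (hinv (f z.2)) (P i z.2))
        (F := hinv (f z.2)) (hδ i) z.1.2.1 (hq0 i)
        (yy_apply_zero _ h (hP0 i _)) (hq i)
        (yy_sub_norm z.1.2.1 z.1.2.2 (hPf i _ h0 h)) (hinv_ne_zero h0)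
      rwa [hinv_hinv] at this
  refine ⟨H, ?_, ?_, ?_, ?_, ?_⟩
  · rw [continuous_iff_continuousAt]
    intro z
    by_cases h0 : f z.2 = 0
    · have hz : H z = 0 := by simp [H, h0]
      rw [ContinuousAt, hz]
      refine squeeze_zero_norm hbd ?_
      have : Continuous fun z : I × T => 5 * ‖f z.2‖ := by fun_prop
      have h2 := this.tendsto z
      simpa [h0] using h2
    · obtain ⟨i, hi, h⟩ := hidx _ h0
      have hi1 := hj.trans hi
      have hc1 : ContinuousAt (fun z : I × T => hinv (f z.2)) z :=
        ContinuousAt.comp (g := hinv) (f := fun z : I × T => f z.2)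
          (continuousAt_hinv h0) (by fun_prop)
      have hc0 : ContinuousAt (fun z : I × T => hinv (f z.2) 0) z := by
        have : Continuous (fun y : EE n => y 0) := by fun_prop
        exact this.continuousAt.comp hc1
      have hev : ∀ᶠ z' in 𝓝 z, H z' = G i z' := by
        have e1 : ∀ᶠ z' in 𝓝 z, f z'.2 ≠ 0 :=
          (hf.comp continuous_snd).continuousAt.eventually_ne h0
        have e2 : ∀ᶠ z' in 𝓝 z, hinv (f z'.2) 0 ∈ Set.Ioo ((i:ℝ) - 1) (i + 1) := by
          apply hc0.eventually_mem
          apply Ioo_mem_nhds <;> rw [h] <;> linarith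
        filter_upwards [e1, e2] with z' h1 h2
        apply hH z' i h1
        obtain ⟨k, -, hk⟩ := hidx _ h1
        rw [hk] at h2 ⊢
        obtain ⟨h3, h4⟩ := h2
        have h3' : (i:ℝ) < k + 1 := by linarith
        have h3'' : i < k + 1 := by exact_mod_cast h3'
        have h4' : k < i + 1 := by exact_mod_cast h4
        have : k = i := by omega
        rw [this]
      refine ContinuousAt.congr_of_eventuallyEq ?_ hev
      have hcy : ContinuousAt (fun z : I × T => yy i z.1 (hinv (f z.2)) (P i z.2)) z := by
        unfold yy
        have := hP i
        have hchi : ContinuousAt (fun z : I × T => chi ‖hinv (f z.2) - ctr n i‖) z :=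
          ContinuousAt.comp (g := chi) (f := fun z : I × T => ‖hinv (f z.2) - ctr n i‖)
            continuous_chi.continuousAt (by fun_prop)
        fun_prop
      have hcl : ContinuousAt (fun z : I × T =>
          lam (q i) (δ i) z.1 (yy i z.1 (hinv (f z.2)) (P i z.2))) z := by
        unfold lam; fun_prop
      have hcw : ContinuousAt (fun z : I × T =>
          ww (q i) (δ i) z.1 (yy i z.1 (hinv (f z.2)) (P i z.2))) z := by
        unfold ww; fun_prop
      have hne := ww_ne_zero hi1 (δ i) z.1 (hq0 i) (yy_apply_zero z.1 h (hP0 i z.2))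
      have hne2 : ‖ww (q i) (δ i) z.1 (yy i z.1 (hinv (f z.2)) (P i z.2))‖ ^ 2 ≠ 0 := by
        simpa using hne
      simp only [G, ex]
      exact ((continuousAt_const.mul hcl).div (hcw.norm.pow 2) hne2).smul hcw
  · intro t
    by_cases h0 : f t = 0
    · simp [H, h0]
    · obtain ⟨i, hi, h⟩ := hidx _ h0
      rw [hH (0, t) i h0 h]
      simp [G, ex_zero, yy, hinv_hinv]
  · intro s t h0
    simp [H, h0]
  · intro s t i hi hm
    by_cases h0 : f t = 0
    · simp only [H, h0, if_true]; exact zero_mem_hawSphere n i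
    · have h := ((mem_sphere_iff (hj.trans hi) _).1 hm).resolve_left h0
      rw [hH (s, t) i h0 h]
      exact ex_mem (hj.trans hi) _ _ (hq0 i) (yy_apply_zero _ h (hP0 i _))
  · intro t ht
    have h0 : f t ≠ 0 := by
      intro h0; apply ht; simp [H, h0]
    refine ⟨h0, fun i h => ?_⟩
    rw [hH (1, t) i h0 h] at ht
    have h1 := ex_one_ne (hδ i) ht
    have h2 := yy_sub_norm (s := 1) zero_le_one le_rfl (hPf i _ h0 h)
    simp only [Set.Icc.coe_one] at h1
    have h3 : ‖hinv (f t) - ctr n i‖ ≤ 2 := by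
      have a : hinv (f t) - ctr n i = (yy i 1 (hinv (f t)) (P i t) - q i) + (q i - ctr n i)
        - (yy i 1 (hinv (f t)) (P i t) - hinv (f t)) := by abel
      rw [a]
      refine (norm_sub_le _ _).trans ?_
      have := norm_add_le (yy i 1 (hinv (f t)) (P i t) - q i) (q i - ctr n i)
      have := hq i
      have := hδ2 i
      linarith
    refine ⟨h3, ?_⟩
    have : yy i 1 (hinv (f t)) (P i t) = P i t := by
      rw [yy, chi_eq_one h3]; simp
    rwa [this] at h1

/-- grid skeleton -/
def Sk (n k : ℕ) : Set (Fin n → I) := {t | ∃ a, ∃ c : ℤ, (2:ℝ) ^ k * t a = c}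

lemma isClosed_Sk (n k : ℕ) : IsClosed (Sk n k) := by
  have : Sk n k = ⋃ a, (fun t : Fin n → I => (2:ℝ) ^ k * t a) ⁻¹' (Set.range ((↑) : ℤ → ℝ)) := by
    ext t; simp [Sk, eq_comm]
  rw [this]
  exact isClosed_iUnion_of_finite fun a =>
    Int.isClosedEmbedding_coe_real.isClosed_range.preimage (by fun_prop)

lemma null_grid (n k : ℕ) :
    MeasureTheory.volume {v : Fin n → ℝ | ∃ a, ∃ c : ℤ, (2:ℝ) ^ k * v a = c} = 0 := by
  have : {v : Fin n → ℝ | ∃ a, ∃ c : ℤ, (2:ℝ) ^ k * v a = c}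
      = ⋃ a, ⋃ c : ℤ, {v : Fin n → ℝ | v a = c / 2 ^ k} := by
    ext v
    simp only [Set.mem_setOf_eq, Set.mem_iUnion]
    refine exists_congr fun a => exists_congr fun c => ?_
    rw [eq_div_iff (by positivity), mul_comm]
  rw [this, MeasureTheory.measure_iUnion_null_iff]
  intro a
  rw [MeasureTheory.measure_iUnion_null_iff]
  intro c
  rw [MeasureTheory.volume_pi]
  exact MeasureTheory.Measure.pi_hyperplane _ a _

def emb (n i : ℕ) (v : Fin n → ℝ) : EE n := WithLp.toLp 2 (Fin.cons (i:ℝ) v)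

lemma continuous_emb (n i : ℕ) : Continuous (emb n i) := by
  unfold emb
  refine (PiLp.continuous_toLp 2 _).comp ?_
  exact continuous_const.finCons continuous_id

lemma emb_zero (n i : ℕ) : emb n i 0 = ctr n i := by
  ext k
  refine Fin.cases ?_ (fun k => ?_) k <;> simp [emb, ctr]

lemma norm_emb_sub_le {n i : ℕ} {x z : EE n} (hx : x 0 = i) :
    ‖emb n i (fun k => z k.succ) - x‖ ≤ ‖z - x‖ := by
  rw [EuclideanSpace.norm_eq, EuclideanSpace.norm_eq]
  apply Real.sqrt_le_sqrt
  rw [Fin.sum_univ_succ, Fin.sum_univ_succ]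
  simp only [emb, PiLp.sub_apply, Fin.cons_zero, Fin.cons_succ, hx, sub_self, norm_zero]
  have : 0 ≤ ‖z 0 - (i:ℝ)‖ ^ 2 := by positivity
  linarith

lemma approx {n : ℕ} (f : (Fin n → I) → EE n) (hf : Continuous f) (k i : ℕ) :
    ∃ (P : (Fin n → I) → EE n) (q : EE n) (δ : ℝ), Continuous P ∧ (∀ t, P t 0 = i) ∧
      (∀ t, f t ≠ 0 → hinv (f t) 0 = i → ‖hinv (f t) - ctr n i‖ ≤ 3 →
        ‖P t - hinv (f t)‖ ≤ 1) ∧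
      q 0 = i ∧ ‖q - ctr n i‖ ≤ 1 / 2 ∧ 0 < δ ∧ δ ≤ 1 / 2 ∧
      ∀ t ∈ Sk n k, δ ≤ ‖P t - q‖ := by
  set c : ℝ := (2 / (i + 3)) ^ 2 with hc
  have hcpos : 0 < c := by positivity
  let κ : EE n → EE n := fun x => (2 / max (‖x‖ ^ 2) c) • x
  have hκ : Continuous κ := by
    have : ∀ x : EE n, max (‖x‖ ^ 2) c ≠ 0 := fun x => (lt_max_of_lt_right hcpos).ne'
    simp only [κ]
    fun_prop (disch := exact this _)
  let pr : (Fin n → ℝ) → (Fin n → I) := fun v a => Set.projIcc 0 1 zero_le_one (v a)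
  have hpr : Continuous pr := by
    refine continuous_pi fun a => continuous_projIcc.comp (continuous_apply a)
  obtain ⟨p, hp, hpd, -⟩ := Continuous.exists_contDiff_approx (f := fun v => κ (f (pr v)))
    (ε := fun _ => 1) 1 (by fun_prop) continuous_const (fun _ => one_pos)
  let g : (Fin n → ℝ) → (Fin n → ℝ) := fun v k => p v k.succ
  have hpdiff : Differentiable ℝ p := hp.differentiable (by simp)
  have hg : Differentiable ℝ g := by
    rw [differentiable_pi]
    intro k
    exact ((EuclideanSpace.proj (𝕜 := ℝ) (k.succ : Fin (n+1))).differentiable).comp hpdiff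
  have hnull : MeasureTheory.volume (g '' {v : Fin n → ℝ | ∃ a, ∃ c : ℤ, (2:ℝ) ^ k * v a = c}) = 0 :=
    MeasureTheory.addHaar_image_eq_zero_of_differentiableOn_of_addHaar_eq_zero _
      hg.differentiableOn (null_grid n k)
  let U : Set (Fin n → ℝ) := emb n i ⁻¹' Metric.ball (ctr n i) (1/2)
  have hU : IsOpen U := Metric.isOpen_ball.preimage (continuous_emb n i)
  have hU0 : (0 : Fin n → ℝ) ∈ U := by
    simp [U, emb_zero]
  have hUpos : 0 < MeasureTheory.volume U := hU.measure_pos _ ⟨0, hU0⟩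
  obtain ⟨q', hq'U, hq'⟩ : ∃ q' ∈ U, q' ∉ g '' {v : Fin n → ℝ | ∃ a, ∃ c : ℤ, (2:ℝ) ^ k * v a = c} := by
    by_contra hcon
    push Not at hcon
    exact hUpos.ne' (MeasureTheory.measure_mono_null hcon hnull)
  let co : (Fin n → I) → (Fin n → ℝ) := fun t a => t a
  have hco : Continuous co := by fun_prop
  let P : (Fin n → I) → EE n := fun t => emb n i (g (co t))
  have hPc : Continuous P := (continuous_emb n i).comp (hg.continuous.comp hco)
  have hK : IsClosed (P '' Sk n k) := ((isClosed_Sk n k).isCompact.image hPc).isClosed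
  have hqK : emb n i q' ∉ P '' Sk n k := by
    rintro ⟨t, ⟨a, c, h⟩, h2⟩
    apply hq'
    refine ⟨co t, ⟨a, c, h⟩, ?_⟩
    have h3 := (WithLp.toLp_injective 2) h2
    exact (Fin.cons_inj.1 h3).2
  obtain ⟨ε, hε, hball⟩ := Metric.isOpen_iff.1 hK.isOpen_compl _ hqK
  refine ⟨P, emb n i q', min ε (1/2), hPc, ?_, ?_, ?_, ?_, ?_, min_le_right _ _, ?_⟩
  · intro t; simp [P, emb]
  · intro t h0 h1 h3
    refine (norm_emb_sub_le h1).trans ?_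
    have hprt : pr (co t) = t := by
      funext a; simp [pr, co]
    have h4 := (hpd (co t)).le
    simp only [hprt] at h4
    rw [dist_eq_norm] at h4
    have hx : 0 < ‖f t‖ := norm_pos_iff.2 h0
    have h5 : κ (f t) = hinv (f t) := by
      simp only [κ, hinv]
      rw [max_eq_left]
      have h6 : ‖hinv (f t)‖ ≤ i + 3 := by
        have := norm_add_le (hinv (f t) - ctr n i) (ctr n i)
        rw [sub_add_cancel, norm_ctr] at this
        linarith
      rw [norm_hinv, div_le_iff₀ hx] at h6
      rw [hc]
      gcongr
      rw [div_le_iff₀ (by positivity)]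
      linarith
    rwa [h5] at h4
  · simp [emb]
  · have := hq'U
    simp only [U, Set.mem_preimage, Metric.mem_ball, dist_eq_norm] at this
    exact this.le
  · positivity
  · intro t ht
    by_contra hlt
    push Not at hlt
    refine hball (?_ : P t ∈ _) ⟨t, ht, rfl⟩
    rw [Metric.mem_ball, dist_eq_norm]
    exact hlt.trans_le (min_le_left _ _)

/-- The main geometric lemma: any loop can be deformed so that a fine grid goes to the origin
and every small cube goes to either the first sphere or the rest. -/
theorem exists_grid {n j : ℕ} (hj : 1 ≤ j) (f : (Fin n → I) → EE n) (hf : Continuous f)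
    (hfX : ∀ t, f t ∈ XX n j) :
    ∃ (k : ℕ) (H : I × (Fin n → I) → EE n), Continuous H ∧ (∀ t, H (0, t) = f t) ∧
      (∀ s t, f t = 0 → H (s, t) = 0) ∧ (∀ s t, H (s, t) ∈ XX n j) ∧
      (∀ t ∈ Sk n k, H (1, t) = 0) ∧
      ∀ c : Fin n → ℤ,
        (∀ t : Fin n → I, (∀ a, (c a : ℝ) ≤ 2 ^ k * t a ∧ 2 ^ k * (t a : ℝ) ≤ c a + 1) →
          H (1, t) ∈ hawSphere n j) ∨
        (∀ t : Fin n → I, (∀ a, (c a : ℝ) ≤ 2 ^ k * t a ∧ 2 ^ k * (t a : ℝ) ≤ c a + 1) →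
          H (1, t) ∈ XX n (j+1)) := by
  let K : Set (Fin n → I) := {t | f t ∈ hawSphere n j ∧ 2 / (j + 2) ≤ ‖f t‖}
  let V : Set (Fin n → I) := {t | f t ∈ XX n (j+1)}ᶜ
  have hK : IsCompact K := by
    apply IsClosed.isCompact
    have h1 : IsClosed {t | f t ∈ hawSphere n j} := by
      unfold hawSphere
      exact Metric.isClosed_sphere.preimage hf
    exact h1.inter (isClosed_le continuous_const hf.norm)
  have hV : IsOpen V := ((isClosed_XX (by omega)).preimage hf).isOpen_compl
  have hj' : (1:ℝ) ≤ j := by exact_mod_cast hj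
  have hKV : K ⊆ V := by
    rintro t ⟨h1, h2⟩ h3
    have h0 : f t ≠ 0 := by
      intro h0
      rw [h0, norm_zero] at h2
      have : 0 < (2:ℝ) / (j + 2) := by positivity
      linarith
    have h4 := ((mem_sphere_iff hj _).1 h1).resolve_left h0
    obtain ⟨i, hi, h5⟩ := ((mem_XX_iff (by omega) _).1 h3).resolve_left h0
    rw [h4] at h5
    have : j = i := Nat.cast_injective (R := ℝ) h5
    omega
  obtain ⟨ε, hε, hthick⟩ := hK.exists_thickening_subset_open hV hKV
  obtain ⟨k, hk⟩ := exists_pow_lt_of_lt_one hε (by norm_num : (1/2 : ℝ) < 1)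
  choose P q δ hP hP0 hPf hq0 hq hδ hδ2 hsk using approx f hf k
  obtain ⟨H, hH, hH0, hHz, hHm, hH1⟩ := deform hj f hf hfX P hP hP0 hPf q hq0 hq δ hδ hδ2
  have hHX : ∀ s t, H (s, t) ∈ XX n j := by
    intro s t
    obtain ⟨i, hi, h⟩ := (mem_XX _).1 (hfX t)
    exact (mem_XX _).2 ⟨i, hi, hHm s t i hi h⟩
  refine ⟨k, H, hH, hH0, hHz, hHX, ?_, ?_⟩
  · intro t ht
    by_contra hne
    obtain ⟨h0, h⟩ := hH1 t hne
    obtain ⟨i, hi, h5⟩ := ((mem_XX_iff hj _).1 (hfX t)).resolve_left h0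
    exact absurd (h i h5).2 (not_lt.2 (hsk i t ht))
  · intro c
    by_cases hcase : ∃ t : Fin n → I, (∀ a, (c a : ℝ) ≤ 2 ^ k * t a ∧ 2 ^ k * (t a : ℝ) ≤ c a + 1) ∧
        H (1, t) ∉ XX n (j+1)
    · left
      obtain ⟨t, htc, htH⟩ := hcase
      have hne : H (1, t) ≠ 0 := by
        intro h; rw [h] at htH; exact htH (zero_mem_XX n _)
      obtain ⟨h0, h⟩ := hH1 t hne
      obtain ⟨i, hi, h5⟩ := ((mem_XX_iff hj _).1 (hfX t)).resolve_left h0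
      have hij : i = j := by
        by_contra hij
        apply htH
        refine (mem_XX _).2 ⟨i, by omega, hHm _ t i hi ?_⟩
        exact (mem_sphere_iff (hj.trans hi) _).2 (Or.inr h5)
      subst hij
      have htK : t ∈ K := by
        refine ⟨(mem_sphere_iff hj _).2 (Or.inr h5), ?_⟩
        have h6 : ‖hinv (f t)‖ ≤ i + 2 := by
          have := norm_add_le (hinv (f t) - ctr n i) (ctr n i)
          rw [sub_add_cancel, norm_ctr] at this
          linarith [(h i h5).1]
        have hx : 0 < ‖f t‖ := norm_pos_iff.2 h0
        rw [norm_hinv, div_le_iff₀ hx] at h6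
        rw [div_le_iff₀ (by positivity)]
        linarith
      intro t' ht'
      have hdist : dist t' t < ε := by
        refine lt_of_le_of_lt ?_ hk
        rw [dist_pi_le_iff (by positivity)]
        intro a
        rw [Subtype.dist_eq, Real.dist_eq]
        have h1 := htc a
        have h2 := ht' a
        have hp : (0:ℝ) < 2 ^ k := by positivity
        rw [one_div, inv_pow, ← one_div, le_div_iff₀ hp]
        rw [← abs_of_pos hp, ← abs_mul, abs_le]
        constructor <;> nlinarith
      have ht'V : t' ∈ V := hthick (Metric.mem_thickening_iff.2 ⟨t, htK, hdist⟩)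
      obtain ⟨l, hl, hl2⟩ := (mem_XX _).1 (hfX t')
      have : l = i := by
        by_contra hne
        exact ht'V ((mem_XX _).2 ⟨l, by omega, hl2⟩)
      subst this
      exact hHm _ _ _ le_rfl hl2
    · right
      push Not at hcase
      exact hcase

section Grid
open GenLoop

variable {m : ℕ} {X : Type*} [TopologicalSpace X] {x0 : X}

lemma transAt_apply (i : Fin (m+2)) (f g : Ω^ (Fin (m+2)) X x0) (t : Fin (m+2) → I) :
    transAt i f g t = if (t i : ℝ) ≤ 1 / 2
      then f (Function.update t i <| Set.projIcc 0 1 zero_le_one (2 * t i))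
      else g (Function.update t i <| Set.projIcc 0 1 zero_le_one (2 * t i - 1)) := rfl

/-- Classes which split as a class in `A` times a class in `B`. -/
def Dec (A B : Set X) (γ : HomotopyGroup (Fin (m+2)) X x0) : Prop :=
  ∃ a b : Ω^ (Fin (m+2)) X x0, (∀ t, a t ∈ A) ∧ (∀ t, b t ∈ B) ∧
    γ = (show HomotopyGroup (Fin (m+2)) X x0 from ⟦a⟧) *
      (show HomotopyGroup (Fin (m+2)) X x0 from ⟦b⟧)

lemma mk_transAt (i : Fin (m+2)) (p q : Ω^ (Fin (m+2)) X x0) :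
    (show HomotopyGroup (Fin (m+2)) X x0 from ⟦transAt i q p⟧) =
      (show HomotopyGroup (Fin (m+2)) X x0 from ⟦p⟧) *
      (show HomotopyGroup (Fin (m+2)) X x0 from ⟦q⟧) :=
  (HomotopyGroup.mul_spec (i := i) (p := p) (q := q)).symm

lemma transAt_mem {A : Set X} (i : Fin (m+2)) {p q : Ω^ (Fin (m+2)) X x0}
    (hp : ∀ t, p t ∈ A) (hq : ∀ t, q t ∈ A) (t) : transAt i p q t ∈ A := by
  rw [transAt_apply]; split_ifs
  · exact hp _
  · exact hq _

lemma Dec.mul {A B : Set X} {γ γ' : HomotopyGroup (Fin (m+2)) X x0} (h : Dec A B γ)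
    (h' : Dec A B γ') : Dec A B (γ * γ') := by
  obtain ⟨a, b, ha, hb, rfl⟩ := h
  obtain ⟨a', b', ha', hb', rfl⟩ := h'
  refine ⟨transAt 0 a' a, transAt 0 b' b, transAt_mem 0 ha' ha, transAt_mem 0 hb' hb, ?_⟩
  rw [mk_transAt, mk_transAt]
  exact mul_mul_mul_comm _ _ _ _

def halfMap (b : Bool) (x : I) : I :=
  ⟨((x : ℝ) + (if b then 1 else 0)) / 2, by
    obtain ⟨x, h0, h1⟩ := x
    cases b <;> constructor <;> simp <;> linarith⟩

lemma halfMap_coe (b : Bool) (x : I) :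
    (halfMap b x : ℝ) = ((x : ℝ) + (if b then 1 else 0)) / 2 := rfl

lemma continuous_halfMap (b : Bool) : Continuous (halfMap b) := by
  unfold halfMap; fun_prop

def subLoop (h : Ω^ (Fin (m+2)) X x0) (i : Fin (m+2))
    (hh : ∀ t : Fin (m+2) → I, (t i : ℝ) = 1 / 2 → h t = x0) (b : Bool) :
    Ω^ (Fin (m+2)) X x0 :=
  ⟨⟨fun t => h (Function.update t i (halfMap b (t i))), by
    have := continuous_halfMap b
    have h1 : Continuous h := h.1.continuous
    fun_prop⟩, by
    rintro t ⟨a, ha⟩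
    change h (Function.update t i (halfMap b (t i))) = x0
    by_cases hai : a = i
    · subst hai
      rcases ha with ha | ha
      · cases b
        · apply h.2
          refine ⟨a, Or.inl ?_⟩
          ext; simp [halfMap_coe, ha]
        · apply hh
          simp [halfMap_coe, ha]
      · cases b
        · apply hh
          simp [halfMap_coe, ha]
        · apply h.2
          refine ⟨a, Or.inr ?_⟩
          ext; simp [halfMap_coe, ha]
    · apply h.2
      refine ⟨a, ?_⟩
      simpa [Function.update_of_ne hai] using ha⟩

lemma subLoop_apply (h : Ω^ (Fin (m+2)) X x0) (i : Fin (m+2)) (hh) (b : Bool) (t) :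
    subLoop h i hh b t = h (Function.update t i (halfMap b (t i))) := rfl

lemma eq_transAt_subLoop (h : Ω^ (Fin (m+2)) X x0) (i : Fin (m+2)) (hh) :
    h = transAt i (subLoop h i hh false) (subLoop h i hh true) := by
  ext t
  rw [transAt_apply]
  obtain ⟨h0, h1⟩ := (t i).2
  split_ifs with hle
  · rw [subLoop_apply]
    congr 1
    rw [Function.update_self, Function.update_idem]
    symm
    rw [Function.update_eq_self_iff]
    ext
    rw [halfMap_coe, Set.projIcc_of_mem _ (by constructor <;> linarith)]
    simp
  · push Not at hle
    rw [subLoop_apply]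
    congr 1
    rw [Function.update_self, Function.update_idem]
    symm
    rw [Function.update_eq_self_iff]
    ext
    rw [halfMap_coe, Set.projIcc_of_mem _ (by constructor <;> linarith)]
    simp

theorem grid_induct {A B : Set X} (hA : x0 ∈ A) (hB : x0 ∈ B) (N : ℕ) :
    ∀ (κ : Fin (m+2) → ℕ), (∑ a, κ a = N) → ∀ (h : Ω^ (Fin (m+2)) X x0),
    (∀ t : Fin (m+2) → I, (∃ a, ∃ c : ℤ, (2:ℝ) ^ κ a * t a = c) → h t = x0) →
    (∀ c : Fin (m+2) → ℤ,
      (∀ t : Fin (m+2) → I, (∀ a, (c a : ℝ) ≤ 2 ^ κ a * t a ∧ 2 ^ κ a * (t a : ℝ) ≤ c a + 1) →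
        h t ∈ A) ∨
      (∀ t : Fin (m+2) → I, (∀ a, (c a : ℝ) ≤ 2 ^ κ a * t a ∧ 2 ^ κ a * (t a : ℝ) ≤ c a + 1) →
        h t ∈ B)) →
    Dec A B (show HomotopyGroup (Fin (m+2)) X x0 from ⟦h⟧) := by
  induction N with
  | zero =>
    intro κ hκ h hsk hc
    have hκ0 : ∀ a, κ a = 0 := by
      intro a
      exact (Finset.sum_eq_zero_iff.1 hκ) a (Finset.mem_univ _)
    have hall : ∀ t : Fin (m+2) → I, ∀ a, (((0 : Fin (m+2) → ℤ) a : ℤ) : ℝ) ≤ 2 ^ κ a * t a ∧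
        2 ^ κ a * (t a : ℝ) ≤ ((0 : Fin (m+2) → ℤ) a : ℤ) + 1 := by
      intro t a
      have := (t a).2
      simp [hκ0, this.1, this.2]
    rcases hc 0 with h1 | h1
    · refine ⟨h, const, fun t => h1 t (hall t), fun t => hB, ?_⟩
      exact (mul_one _).symm
    · refine ⟨const, h, fun t => hA, fun t => h1 t (hall t), ?_⟩
      exact (one_mul _).symm
  | succ N ih =>
    intro κ hκ h hsk hc
    obtain ⟨i, hi⟩ : ∃ i, κ i ≠ 0 := by
      by_contra hcon
      push Not at hcon
      simp [hcon] at hκ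
    obtain ⟨r, hr⟩ := Nat.exists_eq_succ_of_ne_zero hi
    have hh : ∀ t : Fin (m+2) → I, (t i : ℝ) = 1 / 2 → h t = x0 := by
      intro t ht
      refine hsk t ⟨i, 2 ^ r, ?_⟩
      rw [ht, hr]; push_cast; rw [Nat.succ_eq_add_one, pow_succ]; ring
    let κ' := Function.update κ i r
    have hκ' : ∑ a, κ' a = N := by
      have h1 := Finset.sum_update_of_mem (Finset.mem_univ i) κ r
      have h2 := Finset.add_sum_erase Finset.univ κ (Finset.mem_univ i)
      rw [Finset.sdiff_singleton_eq_erase] at h1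
      simp only [κ']
      omega
    have hκi : κ' i = r := by simp [κ']
    have hκn : ∀ a, a ≠ i → κ' a = κ a := fun a ha => by simp [κ', ha]
    have key : ∀ b : Bool, Dec A B (show HomotopyGroup (Fin (m+2)) X x0 from
        ⟦subLoop h i hh b⟧) := by
      intro b
      have hval : ∀ x : I, (2:ℝ) ^ κ i * halfMap b x
          = 2 ^ r * x + ((if b then 2 ^ r else 0 : ℤ) : ℝ) := by
        intro x
        rw [halfMap_coe, hr, Nat.succ_eq_add_one, pow_succ]
        cases b <;> simp <;> ring
      refine ih κ' hκ' _ ?_ ?_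
      · rintro t ⟨a, c, hac⟩
        rw [subLoop_apply]
        apply hsk
        by_cases hai : a = i
        · subst hai
          refine ⟨a, c + (if b then 2 ^ r else 0 : ℤ), ?_⟩
          rw [Function.update_self, hval, Int.cast_add, ← hac, hκi]
        · refine ⟨a, c, ?_⟩
          rw [Function.update_of_ne hai, ← hκn a hai, hac]
      · intro c
        have htr : ∀ t : Fin (m+2) → I,
            (∀ a, (c a : ℝ) ≤ 2 ^ κ' a * t a ∧ 2 ^ κ' a * (t a : ℝ) ≤ c a + 1) →
            ∀ a, ((Function.update c i (c i + (if b then 2 ^ r else 0 : ℤ)) a : ℤ) : ℝ)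
                ≤ 2 ^ κ a * (Function.update t i (halfMap b (t i)) a : I) ∧
              2 ^ κ a * ((Function.update t i (halfMap b (t i)) a : I) : ℝ)
                ≤ (Function.update c i (c i + (if b then 2 ^ r else 0 : ℤ)) a : ℤ) + 1 := by
          intro t ht a
          have := ht a
          by_cases hai : a = i
          · subst hai
            rw [Function.update_self, Function.update_self, hval, Int.cast_add]
            rw [hκi] at this
            constructor <;> linarith [this.1, this.2]
          · rw [Function.update_of_ne hai, Function.update_of_ne hai, ← hκn a hai]
            exact this
        rcases hc (Function.update c i (c i + (if b then 2 ^ r else 0 : ℤ))) with h1 | h1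
        · exact Or.inl fun t ht => h1 _ (htr t ht)
        · exact Or.inr fun t ht => h1 _ (htr t ht)
    rw [eq_transAt_subLoop h i hh, mk_transAt]
    exact (key true).mul (key false)

end Grid

def xpt (n j : ℕ) : XX n j := ⟨0, zero_mem_XX n j⟩

open GenLoop in
theorem step {m j : ℕ} (hj : 1 ≤ j) (f : Ω^ (Fin (m+2)) (XX (m+2) j) (xpt (m+2) j)) :
    ∃ (a b : Ω^ (Fin (m+2)) (XX (m+2) j) (xpt (m+2) j)),
      (∀ t, (a t : EE (m+2)) ∈ hawSphere (m+2) j) ∧ (∀ t, (b t : EE (m+2)) ∈ XX (m+2) (j+1)) ∧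
      Homotopic f (transAt 0 a b) := by
  obtain ⟨k, H, hH, hH0, hHz, hHX, hHsk, hHc⟩ := exists_grid hj (fun t => (f t : EE (m+2)))
    (continuous_subtype_val.comp f.1.continuous) (fun t => (f t).2)
  have hbd : ∀ t ∈ Cube.boundary (Fin (m+2)), ∀ s, H (s, t) = 0 := by
    intro t ht s
    apply hHz
    rw [GenLoop.boundary f t ht]; rfl
  let h : Ω^ (Fin (m+2)) (XX (m+2) j) (xpt (m+2) j) :=
    ⟨⟨fun t => ⟨H (1, t), hHX 1 t⟩, by fun_prop⟩, fun t ht => Subtype.ext (hbd t ht 1)⟩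
  have hfh : Homotopic f h := by
    refine ⟨⟨⟨⟨fun z => ⟨H z, hHX z.1 z.2⟩, by fun_prop⟩, ?_, ?_⟩, ?_⟩⟩
    · intro t; exact Subtype.ext (hH0 t)
    · intro t; rfl
    · intro s t ht
      refine Subtype.ext ?_
      change H (s, t) = f.1 t
      rw [f.2 t ht, hbd t ht s]; rfl
  obtain ⟨a, b, ha, hb, hab⟩ := grid_induct (A := {x | (x : EE (m+2)) ∈ hawSphere (m+2) j})
    (B := {x | (x : EE (m+2)) ∈ XX (m+2) (j+1)}) (x0 := xpt (m+2) j) (m := m)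
    (zero_mem_hawSphere _ _) (zero_mem_XX _ _) _ (fun _ => k) rfl h
    (fun t ht => Subtype.ext (hHsk t ht)) hHc
  refine ⟨a, b, ha, hb, hfh.trans ?_⟩
  rw [mul_comm, ← mk_transAt 0] at hab
  exact Quotient.exact hab

section Limit

variable {m : ℕ}

def u1 (x : I) : I := Set.projIcc 0 1 zero_le_one (2 * (x : ℝ))
def u2 (x : I) : I := Set.projIcc 0 1 zero_le_one (2 * (x : ℝ) - 1)

lemma continuous_u1 : Continuous u1 := by
  unfold u1; exact continuous_projIcc.comp (by fun_prop)
lemma continuous_u2 : Continuous u2 := by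
  unfold u2; exact continuous_projIcc.comp (by fun_prop)

lemma u1_half {x : I} (h : (x : ℝ) = 1 / 2) : u1 x = 1 := by
  rw [u1, h]; norm_num
lemma u2_half {x : I} (h : (x : ℝ) = 1 / 2) : u2 x = 0 := by
  rw [u2, h]; norm_num
lemma u1_zero : u1 0 = 0 := by simp [u1]
lemma u2_one : u2 1 = 1 := by rw [u2]; norm_num
lemma u2_coe {x : I} (h : 1 / 2 ≤ (x : ℝ)) : (u2 x : ℝ) = 2 * x - 1 := by
  have := x.2.2
  rw [u2, Set.projIcc_of_mem _ (by constructor <;> linarith)]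

def w1 (t : Fin (m+2) → I) : Fin (m+2) → I := Function.update t 0 (u1 (t 0))
def w2 (t : Fin (m+2) → I) : Fin (m+2) → I := Function.update t 0 (u2 (t 0))

lemma continuous_w1 : Continuous (w1 (m := m)) := by
  have := continuous_u1; unfold w1; fun_prop
lemma continuous_w2 : Continuous (w2 (m := m)) := by
  have := continuous_u2; unfold w2; fun_prop

lemma w1_bd {t : Fin (m+2) → I} (ht : t ∈ Cube.boundary (Fin (m+2))) (h : (t 0 : ℝ) ≤ 1 / 2) :
    w1 t ∈ Cube.boundary (Fin (m+2)) := by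
  obtain ⟨a, ha⟩ := ht
  by_cases h0 : a = 0
  · subst h0
    rcases ha with ha | ha
    · exact ⟨0, Or.inl (by simp [w1, ha, u1_zero])⟩
    · rw [ha] at h; norm_num at h
  · exact ⟨a, by simpa [w1, h0] using ha⟩

lemma w2_bd {t : Fin (m+2) → I} (ht : t ∈ Cube.boundary (Fin (m+2))) (h : ¬ (t 0 : ℝ) ≤ 1 / 2) :
    w2 t ∈ Cube.boundary (Fin (m+2)) := by
  obtain ⟨a, ha⟩ := ht
  by_cases h0 : a = 0
  · subst h0
    rcases ha with ha | ha
    · rw [ha] at h; norm_num at h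
    · exact ⟨0, Or.inr (by simp [w2, ha, u2_one])⟩
  · exact ⟨a, by simpa [w2, h0] using ha⟩

/-- Finite truncations of the infinite homotopy. -/
def KK (F A : ℕ → (Fin (m+2) → I) → EE (m+2)) (H : ℕ → I × (Fin (m+2) → I) → EE (m+2)) :
    ℕ → ℕ → I × (Fin (m+2) → I) → EE (m+2)
  | 0, j, z => F j z.2
  | r+1, j, z => if (z.1 : ℝ) ≤ 1 / 2 then H j (u1 z.1, z.2) else
      if (z.2 0 : ℝ) ≤ 1 / 2 then A j (w1 z.2) else KK F A H r (j+1) (u2 z.1, w2 z.2)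

theorem infinite_concat (F A : ℕ → (Fin (m+2) → I) → EE (m+2))
    (H : ℕ → I × (Fin (m+2) → I) → EE (m+2))
    (hFc : ∀ j, Continuous (F j)) (hAc : ∀ j, Continuous (A j)) (hHc : ∀ j, Continuous (H j))
    (hFb : ∀ j, ∀ t ∈ Cube.boundary (Fin (m+2)), F j t = 0)
    (hAb : ∀ j, ∀ t ∈ Cube.boundary (Fin (m+2)), A j t = 0)
    (hHb : ∀ j s, ∀ t ∈ Cube.boundary (Fin (m+2)), H j (s, t) = 0)
    (hFX : ∀ j t, F j t ∈ XX (m+2) (j+1))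
    (hAS : ∀ j t, A j t ∈ hawSphere (m+2) (j+1))
    (hHX : ∀ j z, H j z ∈ XX (m+2) (j+1))
    (hH0 : ∀ j t, H j (0, t) = F j t)
    (hH1 : ∀ j t, H j (1, t) = if (t 0 : ℝ) ≤ 1 / 2 then A j (w1 t) else F (j+1) (w2 t)) :
    ∃ K : I × (Fin (m+2) → I) → EE (m+2), Continuous K ∧ (∀ t, K (0, t) = F 0 t) ∧
      (∀ s, ∀ t ∈ Cube.boundary (Fin (m+2)), K (s, t) = 0) ∧ (∀ z, K z ∈ XX (m+2) 1) ∧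
      ∀ i : ℕ, ∀ t : Fin (m+2) → I,
        (1 - (2⁻¹ : ℝ) ^ i ≤ (t 0 : ℝ) ∧ (t 0 : ℝ) ≤ 1 - (2⁻¹ : ℝ) ^ (i+1)) →
        K (1, t) ∈ hawSphere (m+2) (i+1) := by
  set Q := KK F A H with hQ
  have Q0 : ∀ j z, Q 0 j z = F j z.2 := fun j z => rfl
  have QS : ∀ r j z, Q (r+1) j z = if (z.1 : ℝ) ≤ 1 / 2 then H j (u1 z.1, z.2) else
      if (z.2 0 : ℝ) ≤ 1 / 2 then A j (w1 z.2) else Q r (j+1) (u2 z.1, w2 z.2) :=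
    fun r j z => rfl
  have Qzero : ∀ r j t, Q r j (0, t) = F j t := by
    intro r j t
    cases r with
    | zero => rfl
    | succ r => rw [QS]; simp [u1_zero, hH0]
  have Qbd : ∀ r j s, ∀ t ∈ Cube.boundary (Fin (m+2)), Q r j (s, t) = 0 := by
    intro r
    induction r with
    | zero => intro j s t ht; exact hFb j t ht
    | succ r ih =>
      intro j s t ht
      rw [QS]
      dsimp only
      split_ifs with h1 h2
      · exact hHb _ _ _ ht
      · exact hAb _ _ (w1_bd ht h2)
      · exact ih _ _ _ (w2_bd ht h2)
  have QX : ∀ r j z, Q r j z ∈ XX (m+2) (j+1) := by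
    intro r
    induction r with
    | zero => intro j z; exact hFX _ _
    | succ r ih =>
      intro j z
      rw [QS]
      split_ifs with h1 h2
      · exact hHX _ _
      · exact sphere_subset_XX _ _ (hAS _ _)
      · exact XX_mono (by omega) (ih _ _)
  have Qc : ∀ r j, Continuous (Q r j) := by
    intro r
    induction r with
    | zero => intro j; exact (hFc j).comp continuous_snd
    | succ r ih =>
      intro j
      have hu1 := continuous_u1
      have hu2 := continuous_u2
      have hw1 := continuous_w1 (m := m)
      have hw2 := continuous_w2 (m := m)
      have e : Q (r+1) j = fun z => if (z.1 : ℝ) ≤ 1 / 2 then H j (u1 z.1, z.2) else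
        if (z.2 0 : ℝ) ≤ 1 / 2 then A j (w1 z.2) else Q r (j+1) (u2 z.1, w2 z.2) :=
        funext (QS r j)
      rw [e]
      have := hAc j
      have := hHc j
      have := ih (j+1)
      refine Continuous.if_le (by fun_prop) ?_ (by fun_prop) (by fun_prop) ?_
      · refine Continuous.if_le (by fun_prop) (by fun_prop) (by fun_prop) (by fun_prop) ?_
        intro z hz
        rw [hAb, Qbd]
        · exact ⟨0, Or.inl (by simp [w2, u2_half hz])⟩
        · exact ⟨0, Or.inr (by simp [w1, u1_half hz])⟩
      · intro z hz
        rw [u1_half hz, u2_half hz, hH1, Qzero]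
  have Qd : ∀ r k j z, ‖Q r j z - Q (r + k) j z‖ ≤ 4 / (r + 1) := by
    have gen : ∀ r k j z, ‖Q r j z - Q (r + k) j z‖ ≤ 4 / ((j + r + 1 : ℕ) : ℝ) := by
      intro r
      induction r with
      | zero =>
        intro k j z
        have h1 := norm_le_of_mem_XX (by omega) (QX 0 j z)
        have h2 := norm_le_of_mem_XX (by omega) (QX (0+k) j z)
        have h3 := norm_sub_le (Q 0 j z) (Q (0+k) j z)
        have : (4:ℝ) / ((j + 0 + 1 : ℕ) : ℝ) = 2 / ((j + 1 : ℕ) : ℝ) + 2 / ((j + 1 : ℕ) : ℝ) := by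
          rw [add_zero]; ring
        linarith
      | succ r ih =>
        intro k j z
        rw [show r + 1 + k = (r + k) + 1 by omega, QS, QS]
        split_ifs with h1 h2
        · simp only [sub_self, norm_zero]; positivity
        · simp only [sub_self, norm_zero]; positivity
        · have := ih k (j+1) (u2 z.1, w2 z.2)
          rwa [show j + (r + 1) + 1 = j + 1 + r + 1 by omega]
    intro r k j z
    refine (gen r k j z).trans ?_
    push_cast
    gcongr
    linarith [(Nat.cast_nonneg j : (0:ℝ) ≤ j)]
  have hlim0 : Filter.Tendsto (fun r : ℕ => (4:ℝ) / (r + 1)) Filter.atTop (𝓝 0) := by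
    have := (tendsto_one_div_add_atTop_nhds_zero_nat (𝕜 := ℝ)).const_mul 4
    simpa [div_eq_mul_inv] using this
  have hex : ∀ j z, ∃ y, Filter.Tendsto (fun r => Q r j z) Filter.atTop (𝓝 y) := by
    intro j z
    apply cauchySeq_tendsto_of_complete
    refine cauchySeq_of_le_tendsto_0' (fun r : ℕ => (4:ℝ) / (r + 1)) ?_ hlim0
    intro r r' hrr
    obtain ⟨k, rfl⟩ := Nat.exists_eq_add_of_le hrr
    rw [dist_eq_norm]
    exact Qd r k j z
  choose K hK using hex
  have hKd : ∀ r j z, ‖Q r j z - K j z‖ ≤ 4 / (r + 1) := by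
    intro r j z
    have h1 : Filter.Tendsto (fun k => ‖Q r j z - Q (r + k) j z‖) Filter.atTop
        (𝓝 ‖Q r j z - K j z‖) := by
      refine (tendsto_const_nhds.sub ?_).norm
      have := (Filter.tendsto_add_atTop_iff_nat r).2 (hK j z)
      simpa [add_comm] using this
    exact le_of_tendsto' h1 (fun k => Qd r k j z)
  have hKc : ∀ j, Continuous (K j) := by
    intro j
    have hu : TendstoUniformly (fun r => Q r j) (K j) Filter.atTop := by
      rw [Metric.tendstoUniformly_iff]
      intro ε hε
      filter_upwards [hlim0.eventually (gt_mem_nhds hε)] with r hr z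
      rw [dist_comm, dist_eq_norm]
      exact (hKd r j z).trans_lt hr
    exact hu.continuous (Filter.Frequently.of_forall fun r => Qc r j)
  have hK1 : ∀ j t, K j (1, t) = if (t 0 : ℝ) ≤ 1 / 2 then A j (w1 t) else K (j+1) (1, w2 t) := by
    intro j t
    have h1 := (Filter.tendsto_add_atTop_iff_nat 1).2 (hK j (1, t))
    refine tendsto_nhds_unique h1 ?_
    have h2 : ¬ (((1 : I) : ℝ) ≤ 1 / 2) := by norm_num
    simp only [QS, h2, if_false, u2_one]
    split_ifs with h3
    · exact tendsto_const_nhds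
    · exact hK (j+1) (1, w2 t)
  have hKX : ∀ j z, K j z ∈ XX (m+2) (j+1) := fun j z =>
    (isClosed_XX (by omega)).mem_of_tendsto (hK j z) (Filter.Eventually.of_forall fun r => QX r j z)
  have hKb : ∀ j s, ∀ t ∈ Cube.boundary (Fin (m+2)), K j (s, t) = 0 := by
    intro j s t ht
    refine tendsto_nhds_unique (hK j (s, t)) ?_
    simp only [Qbd _ _ _ _ ht]
    exact tendsto_const_nhds
  refine ⟨K 0, hKc 0, ?_, hKb 0, hKX 0, ?_⟩
  · intro t
    refine tendsto_nhds_unique (hK 0 (0, t)) ?_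
    simp only [Qzero]
    exact tendsto_const_nhds
  · have main : ∀ i j : ℕ, ∀ t : Fin (m+2) → I,
        (1 - (2⁻¹ : ℝ) ^ i ≤ (t 0 : ℝ) ∧ (t 0 : ℝ) ≤ 1 - (2⁻¹ : ℝ) ^ (i+1)) →
        K j (1, t) ∈ hawSphere (m+2) (j+i+1) := by
      intro i
      induction i with
      | zero =>
        intro j t ht
        rw [hK1, if_pos (by have := ht.2; norm_num at this; linarith)]
        exact hAS j _
      | succ i ih =>
        intro j t ht
        rw [hK1]
        have hle : (2⁻¹ : ℝ) ^ i ≤ 1 := pow_le_one₀ (by norm_num) (by norm_num)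
        have hge : 1 / 2 ≤ (t 0 : ℝ) := by
          have := ht.1
          rw [pow_succ] at this
          linarith
        split_ifs with h
        · have : A j (w1 t) = 0 := by
            apply hAb
            exact ⟨0, Or.inr (by simp [w1, u1_half (le_antisymm h hge)])⟩
          rw [this]
          exact zero_mem_hawSphere _ _
        · have := ih (j+1) (w2 t) (by
            have e : (w2 t 0 : ℝ) = 2 * t 0 - 1 := by
              simp only [w2, Function.update_self]; exact u2_coe hge
            rw [e]
            have h1 := ht.1
            have h2 := ht.2
            rw [pow_succ] at h1 h2
            constructor <;> linarith)
          rwa [show j + (i + 1) + 1 = j + 1 + i + 1 by omega]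
    intro i t ht
    have := main i 0 t ht
    rwa [zero_add] at this

end Limit

open GenLoop in
theorem main_aux (m : ℕ) (f : Ω^ (Fin (m+2)) (XX (m+2) 1) (xpt (m+2) 1)) :
    ∃ h : Ω^ (Fin (m+2)) (XX (m+2) 1) (xpt (m+2) 1), Homotopic f h ∧
      ∀ i : ℕ, ∀ t : Fin (m+2) → I,
        (1 - (2⁻¹ : ℝ) ^ i ≤ (t 0 : ℝ) ∧ (t 0 : ℝ) ≤ 1 - (2⁻¹ : ℝ) ^ (i+1)) →
        (h t : EE (m+2)) ∈ hawSphere (m+2) (i+1) := by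
  choose a b ha hb hab using fun (j : ℕ) => step (m := m) (j := j+1) (by omega)
  let nxt : ∀ j : ℕ, Ω^ (Fin (m+2)) (XX (m+2) (j+1)) (xpt (m+2) (j+1)) →
      Ω^ (Fin (m+2)) (XX (m+2) (j+2)) (xpt (m+2) (j+2)) := fun j g =>
    ⟨⟨fun t => ⟨(b j g t : EE (m+2)), hb j g t⟩, by
      have : Continuous (b j g) := (b j g).1.continuous
      fun_prop⟩, fun t ht => Subtype.ext (by
        change (b j g t : EE (m+2)) = 0
        rw [GenLoop.boundary _ t ht]; rfl)⟩
  let g : ∀ j : ℕ, Ω^ (Fin (m+2)) (XX (m+2) (j+1)) (xpt (m+2) (j+1)) := fun j =>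
    Nat.rec f (fun j g => nxt j g) j
  have hg0 : g 0 = f := rfl
  have hgS : ∀ j, g (j+1) = nxt j (g j) := fun j => rfl
  let Hm := fun j => (hab j (g j)).some
  obtain ⟨K, hKc, hK0, hKb, hKX, hKi⟩ := infinite_concat (m := m)
    (fun j t => (g j t : EE (m+2))) (fun j t => (a j (g j) t : EE (m+2)))
    (fun j z => (Hm j z : EE (m+2)))
    (fun j => continuous_subtype_val.comp (g j).1.continuous)
    (fun j => continuous_subtype_val.comp (a j (g j)).1.continuous)
    (fun j => continuous_subtype_val.comp (Hm j).continuous)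
    (fun j t ht => by rw [GenLoop.boundary _ t ht]; rfl)
    (fun j t ht => by rw [GenLoop.boundary _ t ht]; rfl)
    (fun j s t ht => by
      rw [(Hm j).eq_fst s ht]
      change (g j t : EE (m+2)) = 0
      rw [GenLoop.boundary _ t ht]; rfl)
    (fun j t => (g j t).2)
    (fun j t => ha j (g j) t)
    (fun j z => (Hm j z).2)
    (fun j t => by rw [(Hm j).apply_zero]; rfl)
    (fun j t => by
      rw [(Hm j).apply_one]
      change ((transAt 0 (a j (g j)) (b j (g j)) t : XX (m+2) (j+1)) : EE (m+2)) = _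
      rw [transAt_apply]
      split_ifs
      · rfl
      · rfl)
  refine ⟨⟨⟨fun t => ⟨K (1, t), hKX _⟩, by fun_prop⟩, fun t ht => Subtype.ext (hKb 1 t ht)⟩,
    ?_, hKi⟩
  refine ⟨⟨⟨⟨fun z => ⟨K z, hKX z⟩, by fun_prop⟩, ?_, ?_⟩, ?_⟩⟩
  · intro t; exact Subtype.ext (hK0 t)
  · intro t; rfl
  · intro s t ht
    refine Subtype.ext ?_
    change K (s, t) = (f t : EE (m+2))
    rw [GenLoop.boundary f t ht, hKb s t ht]; rfl

end HawProof

/-- For `n = m+2 ≥ 2`, every homotopy class in `π_n(ℋ_n, 0)` is represented by a standard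
`n`-loop `h`: one with `h(J_i^n) ⊆ S_i^n` for every `i ≥ 1`, where
`J_i^n = [1 - 2^{-(i-1)}, 1 - 2^{-i}] × [0,1]^{n-1}`. -/
theorem exists_standard_representative (m : ℕ)
    (γ : HomotopyGroup (Fin (m+2)) (hawaiian (m+2)) (hawaiianPt (m+2))) :
    ∃ h : Ω^ (Fin (m+2)) (hawaiian (m+2)) (hawaiianPt (m+2)),
      (⟦h⟧ : HomotopyGroup (Fin (m+2)) (hawaiian (m+2)) (hawaiianPt (m+2))) = γ ∧
      ∀ i : ℕ, 1 ≤ i → ∀ t : Fin (m+2) → I,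
        (1 - ((2 : ℝ))⁻¹ ^ (i - 1) ≤ (t 0 : ℝ) ∧ (t 0 : ℝ) ≤ 1 - ((2 : ℝ))⁻¹ ^ i) →
        ((h t : ↥(hawaiian (m+2))) : EuclideanSpace ℝ (Fin (m+3))) ∈ hawSphere (m+2) i := by
  induction γ using Quotient.inductionOn with
  | _ f =>
    obtain ⟨h, hfh, hh⟩ := HawProof.main_aux m f
    refine ⟨h, (Quotient.sound hfh).symm, ?_⟩
    intro i hi t ht
    obtain ⟨i, rfl⟩ := Nat.exists_eq_add_of_le' hi
    rw [Nat.add_sub_cancel] at ht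
    exact hh i t ht
end
end

section
/- Let n ≥ 2 be an integer. If f is an n-loop in ℋ_n based at 0 such that for every i ≥ 1 the composite R_i ∘ f : [0,1]^n → Y_i^{(n)} is nullhomotopic relative to ∂([0,1]^n), then f itself is nullhomotopic relative to ∂([0,1]^n) in ℋ_n. Equivalently, the natural homomorphism β_n : π_n(ℋ_n, 0) → ∏_{i≥1} π_n(Y_i^{(n)}, 0), γ ↦ ((R_i)_*(γ))_{i≥1}, is injective. -/
open scoped Topology Topology.Homotopy unitInterval

noncomputable section

/-- Composition of a generalized loop with a basepoint-preserving continuous map. -/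
def GenLoop.compCM {X Y : Type*} [TopologicalSpace X] [TopologicalSpace Y] {x : X} {y : Y}
    {N : Type*} (φ : C(X, Y)) (hφ : φ x = y) (p : Ω^ N X x) : Ω^ N Y y :=
  ⟨φ.comp p.1, fun t ht => by
    simp only [ContinuousMap.comp_apply]
    rw [p.2 t ht, hφ]⟩

/-- The homomorphism `φ_*` induced on `N`-th homotopy groups by a basepoint-preserving
continuous map `φ`, sending the class of a loop `f` to the class of `φ ∘ f`. -/
def piInduced {X Y : Type*} [TopologicalSpace X] [TopologicalSpace Y] {x : X} {y : Y}
    (N : Type*) (φ : C(X, Y)) (hφ : φ x = y) :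
    HomotopyGroup N X x → HomotopyGroup N Y y :=
  Quotient.map (GenLoop.compCM φ hφ) fun _ _ h =>
    h.map fun F => F.compContinuousMap φ


/-! ### Part 1: deforming maps to a sphere off a grid -/

section SphereDeform

/-- A point of the cube lies on the dyadic grid of level `k`. -/
def OnGrid (m k : ℕ) (x : Fin (m+2) → I) : Prop :=
  ∃ i, ∃ c : ℕ, (2:ℝ)^k * (x i : ℝ) = c

variable {V : Type} [NormedAddCommGroup V] [InnerProductSpace ℝ V] [FiniteDimensional ℝ V]

lemma exists_approx (m k : ℕ) (hV : Module.finrank ℝ V = m + 3) (e : V)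
    (F : C(Fin (m+2) → I, V)) :
    ∃ g : C(Fin (m+2) → I, V), (∀ x, ‖g x - F x‖ ≤ 1/4) ∧
      ∀ x, OnGrid m k x → ∀ s : ℝ, g x ≠ s • e := by
  have hF : Continuous (fun y : Fin (m+2) → ℝ => F (fun i => Set.projIcc 0 1 zero_le_one (y i))) := by
    refine F.continuous.comp ?_
    exact continuous_pi fun i => continuous_projIcc.comp (continuous_apply i)
  obtain ⟨g, hg, hgF, -⟩ := hF.exists_contDiff_approx 1 (ε := fun _ => 1/8) continuous_const
    (fun _ => by norm_num)
  -- the bad set of translations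
  let A : Fin (m+2) → ℕ → Set V := fun i c =>
    Set.range (fun p : (Fin (m+1) → ℝ) × ℝ => p.2 • e - g (i.insertNth ((c:ℝ)/2^k) p.1))
  have hA : ∀ i c, dimH (A i c) ≤ ((m + 2 : ℕ) : ENNReal) := by
    intro i c
    have hins : ContDiff ℝ 1 (fun p : (Fin (m+1) → ℝ) × ℝ =>
        (i.insertNth ((c:ℝ)/2^k) p.1 : Fin (m+2) → ℝ)) := by
      rw [contDiff_pi]
      intro j
      refine Fin.succAboveCases i ?_ (fun j' => ?_) j
      · simpa using contDiff_const
      · simp only [Fin.insertNth_apply_succAbove]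
        fun_prop
    have hc : ContDiff ℝ 1 (fun p : (Fin (m+1) → ℝ) × ℝ =>
        p.2 • e - g (i.insertNth ((c:ℝ)/2^k) p.1)) := by
      refine ContDiff.sub (by fun_prop) ?_
      exact ContDiff.comp (g := g) (by simpa using hg) hins
    refine hc.dimH_range_le.trans ?_
    simp [Module.finrank_prod]
    norm_cast
  have hU : dimH (⋃ i, ⋃ c, A i c) < Module.finrank ℝ V := by
    refine lt_of_le_of_lt (b := ((m + 2 : ℕ) : ENNReal)) ?_ ?_
    · rw [dimH_iUnion]
      refine iSup_le fun i => ?_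
      rw [dimH_iUnion]
      exact iSup_le fun c => hA i c
    · rw [hV]; exact_mod_cast Nat.lt_succ_self _
  have hD := dense_compl_of_dimH_lt_finrank hU
  obtain ⟨w, hw, hw0⟩ := hD.exists_dist_lt (0:V) (ε := 1/8) (by norm_num)
  refine ⟨⟨fun x => g (fun i => (x i : ℝ)) + w, ?_⟩, ?_, ?_⟩
  · refine (hg.continuous.comp ?_).add continuous_const
    fun_prop
  · intro x
    have h1 := hgF (fun i => (x i : ℝ))
    simp only [Set.projIcc_val] at h1
    rw [dist_eq_norm] at h1
    rw [dist_zero_left] at hw0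
    have : (g (fun i => (x i : ℝ)) + w) - F x = (g (fun i => (x i : ℝ)) - F x) + w := by abel
    simp only [ContinuousMap.coe_mk]
    rw [this]
    refine (norm_add_le _ _).trans ?_
    have : F (fun i => x i) = F x := rfl
    rw [this] at h1
    linarith
  · rintro x ⟨i, c, hx⟩ s hs
    apply hw
    simp only [Set.mem_iUnion]
    refine ⟨i, c, ⟨(fun j => (x (i.succAbove j) : ℝ), s), ?_⟩⟩
    have hxx : (i.insertNth ((c:ℝ)/2^k) (fun j => (x (i.succAbove j) : ℝ)) : Fin (m+2) → ℝ)
        = fun i => (x i : ℝ) := by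
      funext j
      refine Fin.succAboveCases i ?_ (fun j' => ?_) j
      · simp only [Fin.insertNth_apply_same]
        rw [← hx]; field_simp
      · simp
    simp only [hxx]
    simp only [ContinuousMap.coe_mk] at hs
    rw [← hs]; abel

/-- Radial projection of a nowhere vanishing map to the unit sphere. -/
def nrm {X : Type*} [TopologicalSpace X] (v : X → V) (hv : Continuous v) (h0 : ∀ x, v x ≠ 0) :
    C(X, Metric.sphere (0:V) 1) where
  toFun x := ⟨‖v x‖⁻¹ • v x, by
    simp [norm_smul, inv_mul_cancel₀ (norm_ne_zero_iff.mpr (h0 x))]⟩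
  continuous_toFun := by
    refine Continuous.subtype_mk ?_ _
    exact (hv.norm.inv₀ (fun x => norm_ne_zero_iff.mpr (h0 x))).smul hv

lemma nrm_of_mem {X : Type*} [TopologicalSpace X] (v : X → V) (hv : Continuous v)
    (h0 : ∀ x, v x ≠ 0) (x : X) (u : Metric.sphere (0:V) 1) (h : v x = u) :
    nrm v hv h0 x = u := by
  apply Subtype.ext
  simp [nrm, h]

lemma nrm_dist {X : Type*} [TopologicalSpace X] (v : X → V) (hv : Continuous v)
    (h0 : ∀ x, v x ≠ 0) (x : X) (u : V) (hu : ‖u‖ = 1) (h : ‖v x - u‖ ≤ 1/4) :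
    ‖(nrm v hv h0 x : V) - u‖ ≤ 1/2 := by
  have h1 : (nrm v hv h0 x : V) - u = (‖v x‖⁻¹ - 1) • v x + (v x - u) := by
    simp only [nrm, ContinuousMap.coe_mk]
    module
  rw [h1]
  refine (norm_add_le _ _).trans ?_
  have h2 : ‖(‖v x‖⁻¹ - 1) • v x‖ = |1 - ‖v x‖| := by
    have := norm_ne_zero_iff.mpr (h0 x)
    rw [norm_smul, Real.norm_eq_abs, ← abs_norm (v x), ← abs_mul, abs_norm]
    congr 1
    field_simp
  have h3 : |1 - ‖v x‖| ≤ 1/4 := by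
    rw [abs_sub_comm]
    have := (abs_norm_sub_norm_le (v x) u).trans h
    rwa [hu] at this
  linarith

lemma sphere_deform (m k : ℕ) (hV : Module.finrank ℝ V = m + 3) (e : V) (he : ‖e‖ = 1)
    (b : Metric.sphere (0:V) 1) (hb : (b : V) = -e)
    (f : C(Fin (m+2) → I, Metric.sphere (0:V) 1)) :
    ∃ f' : C(Fin (m+2) → I, Metric.sphere (0:V) 1),
      f.HomotopicRel f' {x | f x = b} ∧ (∀ x, OnGrid m k x → f' x = b) ∧
      (∀ x, inner ℝ (f x : V) e ≤ 0 → f' x = b) := by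
  obtain ⟨g, hgf, hgrid⟩ := exists_approx m k hV e ⟨fun x => (f x : V), by fun_prop⟩
  simp only [ContinuousMap.coe_mk] at hgf
  let lam : (Fin (m+2) → I) → ℝ := fun x => min 1 (max 0 (1 + 2 * inner ℝ (f x : V) e))
  have hlam : Continuous lam := by fun_prop
  have hlam0 : ∀ x, 0 ≤ lam x := fun x => le_min zero_le_one (le_max_left _ _)
  have hlam1 : ∀ x, lam x ≤ 1 := fun x => min_le_left _ _
  have hfn : ∀ x, ‖(f x : V)‖ = 1 := fun x => by simpa using (f x).2
  let v : I × (Fin (m+2) → I) → V :=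
    fun p => (f p.2 : V) + ((p.1:ℝ) * lam p.2) • (g p.2 - f p.2)
  have hv : Continuous v := by fun_prop
  have hvd : ∀ p, ‖v p - f p.2‖ ≤ 1/4 := by
    intro p
    have : v p - f p.2 = ((p.1:ℝ) * lam p.2) • (g p.2 - f p.2) := by simp [v]
    rw [this, norm_smul, Real.norm_eq_abs,
      abs_of_nonneg (mul_nonneg p.1.2.1 (hlam0 _))]
    have h1 : (p.1:ℝ) * lam p.2 ≤ 1 := mul_le_one₀ p.1.2.2 (hlam0 _) (hlam1 _)
    calc _ ≤ 1 * ‖g p.2 - f p.2‖ := by gcongr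
      _ ≤ _ := by simpa using hgf p.2
  have hv0 : ∀ p, v p ≠ 0 := by
    intro p h
    have := hvd p
    rw [h, zero_sub, norm_neg, hfn] at this
    norm_num at this
  let H := nrm v hv hv0
  let h1 : C(Fin (m+2) → I, Metric.sphere (0:V) 1) := H.comp ⟨fun x => (1, x), by fun_prop⟩
  have hbase : ∀ x, f x = b → lam x = 0 := by
    intro x hx
    have : inner ℝ (f x : V) e = -1 := by
      rw [hx, hb, inner_neg_left, real_inner_self_eq_norm_sq, he]; norm_num
    simp only [lam, this]; norm_num
  have rel1 : f.HomotopicRel h1 {x | f x = b} := by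
    refine ⟨⟨⟨H, ?_, ?_⟩, ?_⟩⟩
    · intro x
      exact nrm_of_mem v hv hv0 _ _ (by simp [v])
    · intro x; rfl
    · intro t x hx
      exact nrm_of_mem v hv hv0 _ _ (by simp [v, hbase x hx])
  have hh1d : ∀ x, ‖(h1 x : V) - f x‖ ≤ 1/2 := fun x =>
    nrm_dist v hv hv0 (1, x) _ (hfn x) (hvd (1,x))
  have near : ∀ x, ‖(h1 x : V) - e‖ ≤ 1/4 → 0 < inner ℝ (f x : V) e := by
    intro x hx
    have h2 : ‖(f x : V) - e‖ ≤ 3/4 := by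
      have : (f x : V) - e = ((h1 x : V) - e) - ((h1 x : V) - f x) := by abel
      rw [this]
      refine (norm_sub_le _ _).trans ?_
      linarith [hh1d x]
    have h3 := norm_sub_sq_real (f x : V) e
    rw [hfn, he] at h3
    nlinarith [norm_nonneg ((f x : V) - e)]
  have hne : ∀ x, OnGrid m k x → (h1 x : V) ≠ e := by
    intro x hx h
    have h2 := near x (by rw [h]; simp)
    have h3 : lam x = 1 := by
      simp only [lam]
      rw [min_eq_left]
      exact le_max_of_le_right (by linarith)
    have h4 : v (1, x) = g x := by simp [v, h3]
    have h5 : (h1 x : V) = ‖g x‖⁻¹ • g x := by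
      change ‖v (1,x)‖⁻¹ • v (1,x) = _
      rw [h4]
    have h6 : ‖g x‖ ≠ 0 := by
      have := hv0 (1,x)
      rw [h4] at this
      exact norm_ne_zero_iff.mpr this
    apply hgrid x hx ‖g x‖
    rw [← h, h5, smul_smul, mul_inv_cancel₀ h6, one_smul]
  -- positive distance
  have hcl : IsClosed {x | OnGrid m k x} := by
    have : {x | OnGrid m k x} = ⋃ i, {x : Fin (m+2) → I | (2:ℝ)^k * (x i : ℝ) ∈
        Set.range (fun c : ℕ => (c:ℝ))} := by
      ext x; simp [OnGrid, eq_comm]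
    rw [this]
    refine isClosed_iUnion_of_finite fun i => ?_
    refine IsClosed.preimage (f := fun x : Fin (m+2) → I => (2:ℝ)^k * (x i : ℝ)) (by fun_prop) ?_
    exact Nat.isClosedEmbedding_coe_real.isClosed_range
  obtain ⟨r, hr0, hr1, hr⟩ : ∃ r : ℝ, 0 < r ∧ r ≤ 1/4 ∧ ∀ x, OnGrid m k x → r ≤ ‖(h1 x : V) - e‖ := by
    rcases Set.eq_empty_or_nonempty {x | OnGrid m k x} with hemp | hnem
    · refine ⟨1/4, by norm_num, le_rfl, fun x hx => ?_⟩
      have : x ∈ {x | OnGrid m k x} := hx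
      rw [hemp] at this; exact this.elim
    · obtain ⟨x₀, hx₀, hmin⟩ := hcl.isCompact.exists_isMinOn hnem
        (f := fun x => ‖(h1 x : V) - e‖) (by fun_prop)
      refine ⟨min (1/4) ‖(h1 x₀ : V) - e‖, ?_, min_le_left _ _, fun x hx => ?_⟩
      · exact lt_min (by norm_num) (norm_pos_iff.mpr (sub_ne_zero.mpr (hne x₀ hx₀)))
      · exact (min_le_right _ _).trans (hmin hx)
  -- second homotopy
  let s : I × (Fin (m+2) → I) → ℝ := fun p => min 1 ((p.1:ℝ) * (‖(h1 p.2 : V) - e‖ / r))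
  have hs : Continuous s := by fun_prop
  let u : I × (Fin (m+2) → I) → V := fun p => (1 - s p) • (h1 p.2 : V) + s p • (-e)
  have hu : Continuous u := by fun_prop
  have hn1 : ∀ x, ‖(h1 x : V)‖ = 1 := fun x => by simpa using (h1 x).2
  have hs0 : ∀ p, 0 ≤ s p := fun p =>
    le_min zero_le_one (mul_nonneg p.1.2.1 (div_nonneg (norm_nonneg _) hr0.le))
  have hs1 : ∀ p, s p ≤ 1 := fun p => min_le_left _ _
  have hu0 : ∀ p, u p ≠ 0 := by
    intro p h
    have h2 : (1 - s p) • (h1 p.2 : V) = s p • e := by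
      simp only [u, smul_neg] at h
      exact eq_of_sub_eq_zero (by rw [sub_eq_add_neg]; exact h)
    have h3 := congrArg norm h2
    rw [norm_smul, norm_smul, hn1, he, Real.norm_eq_abs, Real.norm_eq_abs,
      abs_of_nonneg (hs0 p), abs_of_nonneg (sub_nonneg.mpr (hs1 p))] at h3
    have h4 : s p = 1/2 := by linarith
    have h5 : (h1 p.2 : V) = e := by
      rw [h4] at h2
      have h6 : (1 - (1/2:ℝ)) = 1/2 := by norm_num
      rw [h6] at h2
      exact smul_right_injective V (by norm_num : (1/2:ℝ) ≠ 0) h2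
    have h7 : s p = 0 := by simp [s, h5]
    rw [h7] at h4; norm_num at h4
  let K := nrm u hu hu0
  let f' : C(Fin (m+2) → I, Metric.sphere (0:V) 1) := K.comp ⟨fun x => (1, x), by fun_prop⟩
  have hfar : ∀ x, r ≤ ‖(h1 x : V) - e‖ → f' x = b := by
    intro x hx
    refine nrm_of_mem u hu hu0 (1, x) _ ?_
    have : s (1, x) = 1 := by
      simp only [s]
      rw [min_eq_left]
      simpa using (one_le_div hr0).mpr hx
    simp [u, this, hb]
  have rel2 : h1.HomotopicRel f' {x | f x = b} := by
    refine ⟨⟨⟨K, ?_, ?_⟩, ?_⟩⟩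
    · intro x
      exact nrm_of_mem u hu hu0 _ _ (by simp [u, s])
    · intro x; rfl
    · intro t x hx
      refine nrm_of_mem u hu hu0 _ _ ?_
      have h2 : h1 x = b := by
        rw [← rel1.fst_eq_snd hx]; exact hx
      simp only [u]
      rw [h2, hb]
      module
  refine ⟨f', rel1.trans rel2, fun x hx => hfar x (hr x hx), fun x hx => hfar x ?_⟩
  by_contra hlt
  push Not at hlt
  exact absurd (near x (hlt.le.trans hr1)) (not_lt.mpr hx)

end SphereDeform

/-! ### Part 2: induced maps and grid decomposition -/

section Groups

variable {N : Type} [DecidableEq N] [Nontrivial N]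
  {X Y : Type} [TopologicalSpace X] [TopologicalSpace Y] {x : X} {y : Y}

lemma compCM_transAt (φ : C(X, Y)) (hφ : φ x = y) (i : N) (p q : Ω^ N X x) :
    GenLoop.compCM φ hφ (GenLoop.transAt i p q) =
      GenLoop.transAt i (GenLoop.compCM φ hφ p) (GenLoop.compCM φ hφ q) := by
  apply GenLoop.ext
  intro t
  change φ (ite _ _ _) = ite _ _ _
  split_ifs <;> rfl

lemma mk_mul_mk (i : N) (p q : Ω^ N X x) :
    ((show HomotopyGroup N X x from ⟦p⟧) * (show HomotopyGroup N X x from ⟦q⟧) :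
      HomotopyGroup N X x) = ⟦GenLoop.transAt i q p⟧ :=
  HomotopyGroup.mul_spec

lemma piInduced_mul (φ : C(X, Y)) (hφ : φ x = y) (a c : HomotopyGroup N X x) :
    piInduced N φ hφ (a * c) = piInduced N φ hφ a * piInduced N φ hφ c := by
  obtain ⟨i⟩ : Nonempty N := inferInstance
  induction a using Quotient.inductionOn with | _ p
  induction c using Quotient.inductionOn with | _ q
  refine (congrArg (piInduced N φ hφ) (mk_mul_mk i p q)).trans ?_
  refine Eq.trans ?_ (mk_mul_mk i (GenLoop.compCM φ hφ p) (GenLoop.compCM φ hφ q)).symm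
  exact congrArg (Quotient.mk _) (compCM_transAt φ hφ i q p)

/-- The induced homomorphism. -/
def piHom (φ : C(X, Y)) (hφ : φ x = y) : HomotopyGroup N X x →* HomotopyGroup N Y y :=
  MonoidHom.mk' (piInduced N φ hφ) (piInduced_mul φ hφ)

/-- A class is split by the pair of self-maps `α`, `β` if it is the product of its images. -/
def SplitClass (α β : C(X, X)) (hα : α x = x) (hβ : β x = x) (a : HomotopyGroup N X x) : Prop :=
  a = piHom α hα a * piHom β hβ a

lemma SplitClass.mul {α β : C(X, X)} {hα : α x = x} {hβ : β x = x} {a c : HomotopyGroup N X x}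
    (ha : SplitClass α β hα hβ a) (hc : SplitClass α β hα hβ c) :
    SplitClass α β hα hβ (a * c) := by
  unfold SplitClass at *
  rw [map_mul, map_mul]
  conv_lhs => rw [ha, hc]
  exact mul_mul_mul_comm _ _ _ _

/-- One half of a generalized loop in direction `i`. -/
def halfMap (i : N) (d : Bool) : C(N → I, N → I) where
  toFun z := Function.update z i (Set.projIcc 0 1 zero_le_one (((z i : ℝ) + cond d 1 0) / 2))
  continuous_toFun := by
    refine Continuous.update continuous_id i ?_
    exact continuous_projIcc.comp (by fun_prop)

lemma halfMap_same (i : N) (d : Bool) (z : N → I) :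
    (halfMap i d z i : ℝ) = ((z i : ℝ) + cond d 1 0) / 2 := by
  simp only [halfMap, ContinuousMap.coe_mk, Function.update_self]
  rw [Set.projIcc_of_mem]
  have := (z i).2
  cases d <;> simp only [cond] <;> constructor <;> linarith [this.1, this.2]

lemma halfMap_ne (i : N) (d : Bool) (z : N → I) {j : N} (h : j ≠ i) :
    halfMap i d z j = z j := by
  simp [halfMap, h]

/-- Half of a loop vanishing on the hyperplane `z i = 1/2`. -/
def halfLoop (f : Ω^ N X x) (i : N) (h : ∀ z, (z i : ℝ) = 1/2 → f z = x) (d : Bool) : Ω^ N X x :=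
  ⟨f.1.comp (halfMap i d), by
    rintro z ⟨j, hj⟩
    change f (halfMap i d z) = x
    by_cases hji : j = i
    · subst hji
      rcases hj with hj | hj <;> cases d
      · exact f.2 _ ⟨j, Or.inl (Subtype.ext (by rw [halfMap_same]; simp [hj]))⟩
      · exact h _ (by rw [halfMap_same]; simp [hj])
      · exact h _ (by rw [halfMap_same]; simp [hj])
      · exact f.2 _ ⟨j, Or.inr (Subtype.ext (by rw [halfMap_same]; simp [hj]))⟩
    · exact f.2 _ ⟨j, by rw [halfMap_ne i d z hji]; exact hj⟩⟩

lemma transAt_halfLoop (f : Ω^ N X x) (i : N) (h : ∀ z, (z i : ℝ) = 1/2 → f z = x) :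
    GenLoop.transAt i (halfLoop f i h false) (halfLoop f i h true) = f := by
  apply GenLoop.ext
  intro t
  change ite _ _ _ = _
  have ht := (t i).2
  split_ifs with hle
  · change f (halfMap i false _) = f t
    congr 1
    funext j
    by_cases hj : j = i
    · subst hj
      apply Subtype.ext
      rw [halfMap_same, Function.update_self, Set.projIcc_of_mem _ ⟨by linarith [ht.1], by linarith⟩]
      simp
    · rw [halfMap_ne _ _ _ hj, Function.update_of_ne hj]
  · change f (halfMap i true _) = f t
    push Not at hle
    congr 1
    funext j
    by_cases hj : j = i
    · subst hj
      apply Subtype.ext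
      rw [halfMap_same, Function.update_self,
        Set.projIcc_of_mem _ ⟨by linarith [ht.1], by linarith [ht.2]⟩]
      simp
    · rw [halfMap_ne _ _ _ hj, Function.update_of_ne hj]

/-- Closed dyadic cell. -/
def Cell (e c : N → ℕ) : Set (N → I) :=
  {z | ∀ i, (c i : ℝ) ≤ 2 ^ (e i) * (z i : ℝ) ∧ 2 ^ (e i) * (z i : ℝ) ≤ c i + 1}

lemma grid_split [Fintype N] (α β : C(X, X)) (hα : α x = x) (hβ : β x = x) (A B : Set X)
    (hA : ∀ f : Ω^ N X x, (∀ z, f z ∈ A) → SplitClass α β hα hβ (⟦f⟧ : HomotopyGroup N X x))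
    (hB : ∀ f : Ω^ N X x, (∀ z, f z ∈ B) → SplitClass α β hα hβ (⟦f⟧ : HomotopyGroup N X x))
    (n : ℕ) : ∀ (e : N → ℕ), ∑ i, e i = n → ∀ f : Ω^ N X x,
    (∀ z, (∃ i, ∃ c : ℕ, (2:ℝ)^(e i) * (z i : ℝ) = c) → f z = x) →
    (∀ c : N → ℕ, (∀ z ∈ Cell e c, f z ∈ A) ∨ (∀ z ∈ Cell e c, f z ∈ B)) →
    SplitClass α β hα hβ (⟦f⟧ : HomotopyGroup N X x) := by
  induction n with
  | zero =>
    intro e he f _ hc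
    have he0 : ∀ i, e i = 0 := by simpa using he
    have hmem : ∀ z, z ∈ Cell e (fun _ => 0) := by
      intro z i
      simp only [he0 i]
      have := (z i).2
      constructor <;> simp [this.1, this.2]
    rcases hc (fun _ => 0) with h | h
    · exact hA f fun z => h z (hmem z)
    · exact hB f fun z => h z (hmem z)
  | succ n ih =>
    intro e he f hg hc
    obtain ⟨i, hi⟩ : ∃ i, e i ≠ 0 := by
      by_contra hcon
      push Not at hcon
      simp [hcon] at he
    obtain ⟨a, ha⟩ := Nat.exists_eq_succ_of_ne_zero hi
    have h : ∀ z, (z i : ℝ) = 1/2 → f z = x := by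
      intro z hz
      refine hg z ⟨i, 2^a, ?_⟩
      rw [hz, ha, pow_succ]; push_cast; ring
    have key : ∀ d, SplitClass α β hα hβ (⟦halfLoop f i h d⟧ : HomotopyGroup N X x) := by
      intro d
      refine ih (Function.update e i a) ?_ _ ?_ ?_
      · have h1 := Finset.sum_update_of_mem (Finset.mem_univ i) e a
        have h2 := Finset.add_sum_erase Finset.univ e (Finset.mem_univ i)
        rw [Finset.sdiff_singleton_eq_erase] at h1
        rw [h1]; omega
      · rintro z ⟨j, c, hz⟩
        change f (halfMap i d z) = x
        by_cases hj : j = i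
        · subst hj
          rw [Function.update_self] at hz
          refine hg _ ⟨j, c + cond d (2^a) 0, ?_⟩
          rw [halfMap_same, ha, pow_succ]
          cases d <;> simp only [cond] <;> push_cast <;> rw [← hz] <;> ring
        · rw [Function.update_of_ne hj] at hz
          exact hg _ ⟨j, c, by rw [halfMap_ne _ _ _ hj, hz]⟩
      · intro c
        have hsub : ∀ z ∈ Cell (Function.update e i a) c,
            halfMap i d z ∈ Cell e (Function.update c i (c i + cond d (2^a) 0)) := by
          intro z hz j
          by_cases hj : j = i
          · subst hj
            have := hz j
            rw [Function.update_self] at this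
            rw [halfMap_same, ha, pow_succ, Function.update_self]
            cases d <;> simp only [cond] <;> push_cast <;> constructor <;>
              nlinarith [this.1, this.2]
          · have := hz j
            rw [Function.update_of_ne hj] at this
            rw [halfMap_ne _ _ _ hj, Function.update_of_ne hj]
            exact this
        rcases hc (Function.update c i (c i + cond d (2^a) 0)) with h' | h'
        · exact Or.inl fun z hz => h' _ (hsub z hz)
        · exact Or.inr fun z hz => h' _ (hsub z hz)
    have := (key true).mul (key false)
    have e1 : (⟦f⟧ : HomotopyGroup N X x) =
        (show HomotopyGroup N X x from ⟦halfLoop f i h true⟧) *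
        (show HomotopyGroup N X x from ⟦halfLoop f i h false⟧) := by
      rw [mk_mul_mk i, transAt_halfLoop]
    rw [e1]
    exact this

end Groups

/-! ### Part 3: the infinite (shrinking) wedge -/

section Wedge

/-- Sequences with at most one coordinate different from the base point. -/
abbrev Wed {S : Type} (b : S) : Type := {s : ℕ → S // ∀ j k, j ≠ k → s j = b ∨ s k = b}

variable {S : Type} [TopologicalSpace S] (b : S)

/-- The base point of the wedge. -/
def wPt : Wed b := ⟨fun _ => b, fun _ _ _ => Or.inl rfl⟩

/-- The coordinate maps. -/
def wCoord (j : ℕ) : C(Wed b, S) := ⟨fun s => s.1 j, (continuous_apply j).comp continuous_subtype_val⟩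

/-- Keep only the coordinate `0`. -/
def wA : C(Wed b, Wed b) where
  toFun s := ⟨fun j => if j = 0 then s.1 j else b, by
    intro j k hjk
    by_cases hj : j = 0
    · right; exact if_neg (by omega)
    · left; exact if_neg hj⟩
  continuous_toFun := by
    refine Continuous.subtype_mk (continuous_pi fun j => ?_) _
    split_ifs
    · exact (continuous_apply _).comp continuous_subtype_val
    · exact continuous_const

/-- Include the wedge factor of index `0`. -/
def wIn : C(S, Wed b) where
  toFun s := ⟨fun j => if j = 0 then s else b, by
    intro j k hjk
    by_cases hj : j = 0
    · right; exact if_neg (by omega)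
    · left; exact if_neg hj⟩
  continuous_toFun := by
    refine Continuous.subtype_mk (continuous_pi fun j => ?_) _
    split_ifs
    · exact continuous_id
    · exact continuous_const

/-- Shift up. -/
def wUp : C(Wed b, Wed b) where
  toFun s := ⟨fun j => if j = 0 then b else s.1 (j - 1), by
    intro j k hjk
    by_cases hj : j = 0
    · left; exact if_pos hj
    by_cases hk : k = 0
    · right; exact if_pos hk
    · beta_reduce
      rw [if_neg hj, if_neg hk]
      exact s.2 _ _ (by omega)⟩
  continuous_toFun := by
    refine Continuous.subtype_mk (continuous_pi fun j => ?_) _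
    split_ifs
    · exact continuous_const
    · exact (continuous_apply _).comp continuous_subtype_val

/-- Shift down. -/
def wDown : C(Wed b, Wed b) where
  toFun s := ⟨fun j => s.1 (j + 1), fun j k hjk => s.2 _ _ (by omega)⟩
  continuous_toFun := by
    refine Continuous.subtype_mk (continuous_pi fun j => ?_) _
    exact (continuous_apply _).comp continuous_subtype_val

lemma wA_pt : wA b (wPt b) = wPt b := by
  apply Subtype.ext; funext j; simp [wA, wPt]

lemma wUp_pt : wUp b (wPt b) = wPt b := by
  apply Subtype.ext; funext j; simp [wUp, wPt]

lemma wDown_pt : wDown b (wPt b) = wPt b := rfl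

lemma wB_pt : ((wUp b).comp (wDown b)) (wPt b) = wPt b := by
  rw [ContinuousMap.comp_apply, wDown_pt, wUp_pt]

lemma wIn_pt : wIn b b = wPt b := by
  apply Subtype.ext; funext j; simp [wIn, wPt]

end Wedge

section WedgeSplit

variable {V : Type} [NormedAddCommGroup V] [InnerProductSpace ℝ V] [FiniteDimensional ℝ V]

lemma cell_dist {m k : ℕ} {c : Fin (m+2) → ℕ} {z w : Fin (m+2) → I}
    (hz : z ∈ Cell (fun _ => k) c) (hw : w ∈ Cell (fun _ => k) c) : dist z w ≤ (1/2)^k := by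
  rw [dist_pi_le_iff (by positivity)]
  intro i
  rw [Subtype.dist_eq, Real.dist_eq, abs_le]
  have h1 := hz i
  have h2 := hw i
  have hp : (0:ℝ) < 2^k := by positivity
  have hq : (2:ℝ)^k * (1/2)^k = 1 := by rw [← mul_pow]; norm_num
  constructor
  · by_contra hcon
    push Not at hcon
    have := mul_lt_mul_of_pos_left hcon hp
    nlinarith [h1.1, h2.2]
  · by_contra hcon
    push Not at hcon
    have := mul_lt_mul_of_pos_left hcon hp
    nlinarith [h1.2, h2.1]

lemma wedge_split (m : ℕ) (hV : Module.finrank ℝ V = m + 3) (e : V) (he : ‖e‖ = 1)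
    (b : Metric.sphere (0:V) 1) (hb : (b : V) = -e) (f : Ω^ (Fin (m+2)) (Wed b) (wPt b)) :
    SplitClass (wA b) ((wUp b).comp (wDown b)) (wA_pt b) (wB_pt b)
      (⟦f⟧ : HomotopyGroup (Fin (m+2)) (Wed b) (wPt b)) := by
  let U : Bool → Set (Fin (m+2) → I) := fun d =>
    cond d {z | (f z).1 0 ≠ b} {z | inner ℝ ((f z).1 0 : V) e < 0}
  have hfc : Continuous fun z => (f z).1 0 := (wCoord b 0).continuous.comp f.1.continuous
  have hU : ∀ d, IsOpen (U d) := by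
    intro d
    cases d
    · exact isOpen_lt (by fun_prop) continuous_const
    · exact isOpen_ne_fun hfc continuous_const
  have hcov : (Set.univ : Set (Fin (m+2) → I)) ⊆ ⋃ d, U d := by
    intro z _
    rw [Set.mem_iUnion]
    by_cases hz : (f z).1 0 = b
    · refine ⟨false, ?_⟩
      change inner ℝ ((f z).1 0 : V) e < 0
      rw [hz, hb, inner_neg_left, real_inner_self_eq_norm_sq, he]; norm_num
    · exact ⟨true, hz⟩
  obtain ⟨δ, hδ, hleb⟩ := lebesgue_number_lemma_of_metric isCompact_univ hU hcov
  obtain ⟨k, hk⟩ := exists_pow_lt_of_lt_one hδ (by norm_num : (1/2:ℝ) < 1)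
  have hdef := fun j => sphere_deform m k hV e he b hb ((wCoord b j).comp f.1)
  choose F' hrel hgrid hneg using hdef
  have hrel' := fun j => (hrel j).some
  have hmem : ∀ t z, ∀ j l, j ≠ l → hrel' j (t, z) = b ∨ hrel' l (t, z) = b := by
    intro t z j l hjl
    rcases (f z).2 j l hjl with h | h
    · left
      exact ((hrel' j).eq_fst t h).trans h
    · right
      exact ((hrel' l).eq_fst t h).trans h
  let H : C(I × (Fin (m+2) → I), Wed b) :=
    ⟨fun p => ⟨fun j => hrel' j p, hmem p.1 p.2⟩, by
      refine Continuous.subtype_mk (continuous_pi fun j => ?_) _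
      exact (hrel' j).continuous⟩
  have hbd : ∀ t z, z ∈ Cube.boundary (Fin (m+2)) → H (t, z) = f z := by
    intro t z hz
    apply Subtype.ext
    funext j
    refine (hrel' j).eq_fst t ?_
    change (f z).1 j = b
    rw [show f z = wPt b from f.2 z hz]; rfl
  let f' : Ω^ (Fin (m+2)) (Wed b) (wPt b) := ⟨H.comp ⟨fun z => (1, z), by fun_prop⟩, by
    intro z hz
    exact (hbd 1 z hz).trans (f.2 z hz)⟩
  have hf'j : ∀ z j, (f' z).1 j = F' j z := fun z j => (hrel' j).apply_one z
  have hhom : (⟦f⟧ : HomotopyGroup (Fin (m+2)) (Wed b) (wPt b)) = ⟦f'⟧ := by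
    apply Quotient.sound
    refine ⟨⟨⟨H, ?_, ?_⟩, ?_⟩⟩
    · intro z
      apply Subtype.ext
      funext j
      exact (hrel' j).apply_zero z
    · intro z; rfl
    · intro t z hz
      exact hbd t z hz
  rw [hhom]
  refine grid_split (wA b) ((wUp b).comp (wDown b)) (wA_pt b) (wB_pt b)
    {s | ∀ j, j ≠ 0 → s.1 j = b} {s | s.1 0 = b} ?_ ?_ _ (fun _ => k) rfl f' ?_ ?_
  · intro g hg
    have h1 : GenLoop.compCM (wA b) (wA_pt b) g = g := by
      apply GenLoop.ext; intro z; apply Subtype.ext; funext j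
      change (if j = 0 then (g z).1 j else b) = _
      split_ifs with hj
      · rfl
      · exact (hg z j hj).symm
    have h2 : GenLoop.compCM ((wUp b).comp (wDown b)) (wB_pt b) g = GenLoop.const := by
      apply GenLoop.ext; intro z; apply Subtype.ext; funext j
      change (if j = 0 then b else (g z).1 (j - 1 + 1)) = b
      split_ifs with hj
      · rfl
      · exact hg z _ (by omega)
    change _ = (show HomotopyGroup _ _ (wPt b) from ⟦GenLoop.compCM (wA b) (wA_pt b) g⟧) *
      (show HomotopyGroup _ _ (wPt b) from
        ⟦GenLoop.compCM ((wUp b).comp (wDown b)) (wB_pt b) g⟧)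
    rw [h1, h2]
    exact (mul_one (show HomotopyGroup (Fin (m+2)) _ (wPt b) from ⟦g⟧)).symm
  · intro g hg
    have h1 : GenLoop.compCM (wA b) (wA_pt b) g = GenLoop.const := by
      apply GenLoop.ext; intro z; apply Subtype.ext; funext j
      change (if j = 0 then (g z).1 j else b) = b
      split_ifs with hj
      · rw [hj]; exact hg z
      · rfl
    have h2 : GenLoop.compCM ((wUp b).comp (wDown b)) (wB_pt b) g = g := by
      apply GenLoop.ext; intro z; apply Subtype.ext; funext j
      change (if j = 0 then b else (g z).1 (j - 1 + 1)) = (g z).1 j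
      split_ifs with hj
      · rw [hj]; exact (hg z).symm
      · rw [Nat.sub_add_cancel (by omega)]
    change _ = (show HomotopyGroup _ _ (wPt b) from ⟦GenLoop.compCM (wA b) (wA_pt b) g⟧) *
      (show HomotopyGroup _ _ (wPt b) from
        ⟦GenLoop.compCM ((wUp b).comp (wDown b)) (wB_pt b) g⟧)
    rw [h1, h2]
    exact (one_mul (show HomotopyGroup (Fin (m+2)) _ (wPt b) from ⟦g⟧)).symm
  · intro z hz
    apply Subtype.ext
    funext j
    rw [hf'j]
    exact hgrid j z hz
  · intro c
    rcases Set.eq_empty_or_nonempty (Cell (fun _ : Fin (m+2) => k) c) with hem | ⟨z0, hz0⟩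
    · left; intro z hz; rw [hem] at hz; exact hz.elim
    · obtain ⟨d, hd⟩ := hleb z0 trivial
      have hin : ∀ z ∈ Cell (fun _ : Fin (m+2) => k) c, z ∈ U d := fun z hz =>
        hd (Metric.mem_ball.mpr ((cell_dist hz hz0).trans_lt hk))
      cases d
      · right
        intro z hz
        change (f' z).1 0 = b
        rw [hf'j]
        exact hneg 0 z (le_of_lt (hin z hz))
      · left
        intro z hz j hj
        have h0 : (f z).1 0 ≠ b := hin z hz
        have h1 : (f z).1 j = b := ((f z).2 j 0 hj).resolve_right h0
        rw [hf'j, ← (hrel j).fst_eq_snd (x := z) h1]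
        exact h1

/-- If the coordinate `0` of a loop is nullhomotopic, it can be removed. -/
lemma wedge_remove (m : ℕ) (hV : Module.finrank ℝ V = m + 3) (e : V) (he : ‖e‖ = 1)
    (b : Metric.sphere (0:V) 1) (hb : (b : V) = -e) (f : Ω^ (Fin (m+2)) (Wed b) (wPt b))
    (h0 : GenLoop.Homotopic (GenLoop.compCM (wCoord b 0) (y := b) rfl f) GenLoop.const) :
    GenLoop.Homotopic f (GenLoop.compCM (wUp b) (wUp_pt b)
      (GenLoop.compCM (wDown b) (wDown_pt b) f)) := by
  have h := wedge_split m hV e he b hb f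
  have h1 : piHom (wA b) (wA_pt b) (⟦f⟧ : HomotopyGroup (Fin (m+2)) (Wed b) (wPt b)) = 1 := by
    have e1 : (⟦GenLoop.compCM (wCoord b 0) (y := b) rfl f⟧ :
        HomotopyGroup (Fin (m+2)) (Metric.sphere (0:V) 1) b) = ⟦GenLoop.const⟧ := Quotient.sound h0
    have e2 := congrArg (piHom (wIn b) (wIn_pt b)) e1
    have e3 : piHom (wIn b) (wIn_pt b)
      (⟦GenLoop.const⟧ : HomotopyGroup (Fin (m+2)) (Metric.sphere (0:V) 1) b) = 1 := map_one _
    rw [e3] at e2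
    rw [← e2]
    change Quotient.mk _ _ = Quotient.mk _ _
    congr 1
    apply GenLoop.ext; intro z; apply Subtype.ext; funext j
    change (if j = 0 then (f z).1 j else b) = if j = 0 then (f z).1 0 else b
    split_ifs with hj
    · rw [hj]
    · rfl
  unfold SplitClass at h
  rw [h1, one_mul] at h
  exact Quotient.exact h

end WedgeSplit

/-! ### Part 4: the infinite concatenation -/

section Infinite

variable {S : Type} [TopologicalSpace S] {b : S} {N : Type}

/-- All coordinates of a loop are nullhomotopic. -/
def AllNull (f : Ω^ N (Wed b) (wPt b)) : Prop :=
  ∀ j, GenLoop.Homotopic (GenLoop.compCM (wCoord b j) (y := b) rfl f) GenLoop.const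

/-- Shift a loop down. -/
def lDown (f : Ω^ N (Wed b) (wPt b)) : Ω^ N (Wed b) (wPt b) :=
  GenLoop.compCM (wDown b) (wDown_pt b) f

/-- Shift a loop up. -/
def lUp (f : Ω^ N (Wed b) (wPt b)) : Ω^ N (Wed b) (wPt b) :=
  GenLoop.compCM (wUp b) (wUp_pt b) f

lemma AllNull.down {f : Ω^ N (Wed b) (wPt b)} (h : AllNull f) : AllNull (lDown f) :=
  fun j => h (j + 1)

/-- Shift down `k` times and then up `k` times. -/
def lIter : ℕ → Ω^ N (Wed b) (wPt b) → Ω^ N (Wed b) (wPt b)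
  | 0, f => f
  | k + 1, f => lUp (lIter k (lDown f))

lemma lIter_coord (j : ℕ) : ∀ (f : Ω^ N (Wed b) (wPt b)) (z : N → I),
    (lIter (j + 1) f z).1 j = b := by
  induction j with
  | zero => intro f z; rfl
  | succ j ih =>
    intro f z
    exact ih (lDown f) z

/-- The finite concatenations of homotopies. -/
def lK (G : ∀ f : Ω^ N (Wed b) (wPt b), AllNull f →
    ContinuousMap.HomotopyRel f.1 (lUp (lDown f)).1 (Cube.boundary N)) :
    (k : ℕ) → (f : Ω^ N (Wed b) (wPt b)) → AllNull f →
      ContinuousMap.HomotopyRel f.1 (lIter k f).1 (Cube.boundary N)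
  | 0, f, _ => ContinuousMap.HomotopyRel.refl _ _
  | k + 1, f, h => (G f h).trans ((lK G k (lDown f) h.down).compContinuousMap (wUp b))

lemma lK_stab (G : ∀ f : Ω^ N (Wed b) (wPt b), AllNull f →
    ContinuousMap.HomotopyRel f.1 (lUp (lDown f)).1 (Cube.boundary N)) (j : ℕ) :
    ∀ (k : ℕ) (f : Ω^ N (Wed b) (wPt b)) (h : AllNull f) (p : I × (N → I)),
    (lK G (j + 1 + k) f h p).1 j = (lK G (j + 1) f h p).1 j := by
  induction j with
  | zero =>
    intro k f h p
    rw [Nat.add_comm (0 + 1) k]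
    change (((G f h).trans ((lK G (k + 0) (lDown f) h.down).compContinuousMap (wUp b))) p).1 0 =
      (((G f h).trans ((lK G 0 (lDown f) h.down).compContinuousMap (wUp b))) p).1 0
    erw [ContinuousMap.HomotopyRel.trans_apply, ContinuousMap.HomotopyRel.trans_apply]
    split_ifs
    · rfl
    · rfl
  | succ j ih =>
    intro k f h p
    rw [show j + 1 + 1 + k = (j + 1 + k) + 1 by omega]
    change (((G f h).trans ((lK G (j + 1 + k) (lDown f) h.down).compContinuousMap
        (wUp b))) p).1 (j + 1) =
      (((G f h).trans ((lK G (j + 1) (lDown f) h.down).compContinuousMap (wUp b))) p).1 (j + 1)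
    erw [ContinuousMap.HomotopyRel.trans_apply, ContinuousMap.HomotopyRel.trans_apply]
    split_ifs
    · rfl
    · exact ih k (lDown f) h.down _

lemma allNull_null
    (hrem : ∀ f : Ω^ N (Wed b) (wPt b), AllNull f → GenLoop.Homotopic f (lUp (lDown f)))
    (f : Ω^ N (Wed b) (wPt b)) (h : AllNull f) : GenLoop.Homotopic f GenLoop.const := by
  let G : ∀ f : Ω^ N (Wed b) (wPt b), AllNull f →
    ContinuousMap.HomotopyRel f.1 (lUp (lDown f)).1 (Cube.boundary N) :=
    fun f h => Classical.choice (hrem f h)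
  have hst : ∀ j k, j < k → ∀ p, (lK G (j + 1) f h p).1 j = (lK G k f h p).1 j := by
    intro j k hjk p
    obtain ⟨d, rfl⟩ := Nat.exists_eq_add_of_le (Nat.succ_le_of_lt hjk)
    exact (lK_stab G j d f h p).symm
  have hmem : ∀ p, ∀ j l, j ≠ l →
      (lK G (j + 1) f h p).1 j = b ∨ (lK G (l + 1) f h p).1 l = b := by
    intro p j l hjl
    rw [hst j (max j l + 1) (by omega) p, hst l (max j l + 1) (by omega) p]
    exact (lK G (max j l + 1) f h p).2 j l hjl
  refine ⟨⟨⟨⟨fun p => ⟨fun j => (lK G (j + 1) f h p).1 j, hmem p⟩, ?_⟩, ?_, ?_⟩, ?_⟩⟩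
  · refine Continuous.subtype_mk (continuous_pi fun j => ?_) _
    exact (wCoord b j).continuous.comp (lK G (j + 1) f h).continuous
  · intro z
    apply Subtype.ext
    funext j
    change (lK G (j + 1) f h (0, z)).1 j = _
    rw [(lK G (j + 1) f h).apply_zero z]
  · intro z
    apply Subtype.ext
    funext j
    change (lK G (j + 1) f h (1, z)).1 j = _
    rw [(lK G (j + 1) f h).apply_one z]
    exact lIter_coord j f z
  · intro t z hz
    apply Subtype.ext
    funext j
    change (lK G (j + 1) f h (t, z)).1 j = _
    rw [(lK G (j + 1) f h).eq_fst t hz]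

end Infinite

section InfiniteSphere

variable {V : Type} [NormedAddCommGroup V] [InnerProductSpace ℝ V] [FiniteDimensional ℝ V]

lemma wedge_inj (m : ℕ) (hV : Module.finrank ℝ V = m + 3) (e : V) (he : ‖e‖ = 1)
    (b : Metric.sphere (0:V) 1) (hb : (b : V) = -e)
    (x y : HomotopyGroup (Fin (m+2)) (Wed b) (wPt b))
    (hxy : ∀ j, piInduced (Fin (m+2)) (wCoord b j) (y := b) rfl x =
      piInduced (Fin (m+2)) (wCoord b j) (y := b) rfl y) : x = y := by
  rw [← mul_inv_eq_one]
  have key : ∀ z : HomotopyGroup (Fin (m+2)) (Wed b) (wPt b),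
      (∀ j, piHom (wCoord b j) (y := b) rfl z = 1) → z = 1 := by
    intro z
    induction z using Quotient.inductionOn with
    | _ f =>
      intro h
      have := allNull_null (N := Fin (m+2)) (b := b)
        (fun f h => wedge_remove m hV e he b hb f (h 0)) f (fun j => Quotient.exact (h j))
      exact Quotient.sound this
  apply key
  intro j
  rw [map_mul, map_inv, mul_inv_eq_one]
  exact hxy j

end InfiniteSphere

/-! ### Part 5: the Hawaiian earring as a wedge -/

section Earring

/-- The unit vector in direction `0`. -/
def eVec (n : ℕ) : EuclideanSpace ℝ (Fin (n+1)) := EuclideanSpace.single 0 1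

lemma eVec_norm (n : ℕ) : ‖eVec n‖ = 1 := by
  unfold eVec; rw [EuclideanSpace.norm_single]; simp

/-- The base point of the unit sphere. -/
def bPt (n : ℕ) : Metric.sphere (0 : EuclideanSpace ℝ (Fin (n+1))) 1 :=
  ⟨-eVec n, by rw [mem_sphere_zero_iff_norm, norm_neg, eVec_norm]⟩

lemma mem_hawSphere_iff (n j : ℕ) (z : EuclideanSpace ℝ (Fin (n+1))) :
    z ∈ hawSphere n (j+1) ↔ ‖((j:ℝ)+1) • z - eVec n‖ = 1 := by
  have hj : (0:ℝ) < (j:ℝ) + 1 := by positivity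
  have h1 : (EuclideanSpace.single (0 : Fin (n+1)) ((1:ℝ)/((j+1 : ℕ):ℝ))) =
      ((j:ℝ)+1)⁻¹ • eVec n := by
    unfold eVec
    ext i
    simp
  have h2 : ((j:ℝ)+1) • z - eVec n = ((j:ℝ)+1) • (z - ((j:ℝ)+1)⁻¹ • eVec n) := by
    rw [smul_sub, smul_smul, mul_inv_cancel₀ hj.ne', one_smul]
  unfold hawSphere
  rw [Metric.mem_sphere, dist_eq_norm, h1, h2, norm_smul, Real.norm_of_nonneg hj.le]
  push_cast
  rw [eq_div_iff hj.ne', mul_comm]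

lemma wed_single {S : Type} {b : S} (s : Wed b) : ∃ j0, ∀ j, j ≠ j0 → s.1 j = b := by
  by_cases h : ∃ j0, s.1 j0 ≠ b
  · obtain ⟨j0, h0⟩ := h
    exact ⟨j0, fun j hj => (s.2 j j0 hj).resolve_right h0⟩
  · push Not at h
    exact ⟨0, fun j _ => h j⟩

/-- The terms of the comparison map. -/
def psiTerm (n : ℕ) (s : Wed (bPt n)) (j : ℕ) : EuclideanSpace ℝ (Fin (n+1)) :=
  ((j:ℝ)+1)⁻¹ • ((s.1 j : EuclideanSpace ℝ (Fin (n+1))) + eVec n)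

lemma psiTerm_zero (n : ℕ) (s : Wed (bPt n)) (j : ℕ) (h : s.1 j = bPt n) :
    psiTerm n s j = 0 := by
  unfold psiTerm; rw [h]; simp [bPt]

lemma psiTerm_norm (n : ℕ) (s : Wed (bPt n)) (j : ℕ) : ‖psiTerm n s j‖ ≤ 2 / ((j:ℝ)+1) := by
  unfold psiTerm
  have hj : (0:ℝ) < (j:ℝ) + 1 := by positivity
  rw [norm_smul, norm_inv, Real.norm_of_nonneg hj.le, div_eq_inv_mul]
  gcongr
  refine (norm_add_le _ _).trans ?_
  rw [eVec_norm, mem_sphere_zero_iff_norm.mp (s.1 j).2]; norm_num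

/-- The comparison map from the wedge, as a vector. -/
def psiVec (n : ℕ) (s : Wed (bPt n)) : EuclideanSpace ℝ (Fin (n+1)) := ∑' j, psiTerm n s j

lemma psiVec_eq (n : ℕ) (s : Wed (bPt n)) (j0 : ℕ) (h : ∀ j, j ≠ j0 → s.1 j = bPt n) :
    psiVec n s = psiTerm n s j0 :=
  tsum_eq_single j0 fun j hj => psiTerm_zero n s j (h j hj)

lemma psiVec_mem (n : ℕ) (s : Wed (bPt n)) : psiVec n s ∈ hawaiian n := by
  obtain ⟨j0, h0⟩ := wed_single s
  rw [psiVec_eq n s j0 h0]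
  have hj : (0:ℝ) < (j0:ℝ) + 1 := by positivity
  refine Set.mem_biUnion (show j0 + 1 ∈ {j : ℕ | 1 ≤ j} by simp) ?_
  rw [mem_hawSphere_iff]
  unfold psiTerm
  rw [smul_smul, mul_inv_cancel₀ hj.ne', one_smul, add_sub_cancel_right]
  exact mem_sphere_zero_iff_norm.mp (s.1 j0).2

lemma psiVec_cont (n : ℕ) : Continuous (psiVec n) := by
  have hu : TendstoUniformly (fun J s => ∑ j ∈ Finset.range J, psiTerm n s j) (psiVec n)
      Filter.atTop := by
    rw [Metric.tendstoUniformly_iff]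
    intro ε hε
    obtain ⟨J0, hJ0⟩ := exists_nat_gt (2/ε)
    filter_upwards [Filter.eventually_ge_atTop J0] with J hJ s
    obtain ⟨j0, h0⟩ := wed_single s
    rw [psiVec_eq n s j0 h0]
    by_cases hj : j0 < J
    · rw [Finset.sum_eq_single_of_mem j0 (Finset.mem_range.mpr hj)
        (fun j _ hjj => psiTerm_zero n s j (h0 j hjj)), dist_self]
      exact hε
    · rw [Finset.sum_eq_zero (fun j hjr => psiTerm_zero n s j (h0 j (by
        rintro rfl; exact hj (Finset.mem_range.mp hjr)))), dist_zero_right]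
      refine (psiTerm_norm n s j0).trans_lt ?_
      have h3 : (J0:ℝ) ≤ j0 := by exact_mod_cast hJ.trans (not_lt.mp hj)
      rw [div_lt_iff₀ (by positivity)]
      rw [div_lt_iff₀ hε] at hJ0
      nlinarith
  refine hu.continuous (Filter.Eventually.frequently (Filter.Eventually.of_forall fun J => ?_))
  refine continuous_finsetSum _ fun j _ => ?_
  have : Continuous fun s : Wed (bPt n) => (s.1 j : EuclideanSpace ℝ (Fin (n+1))) :=
    continuous_subtype_val.comp (wCoord (bPt n) j).continuous
  unfold psiTerm
  exact (continuous_const (y := ((j:ℝ)+1)⁻¹)).smul (this.add continuous_const)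

/-- The comparison map from the wedge to the earring. -/
def psiMap (n : ℕ) : C(Wed (bPt n), ↥(hawaiian n)) :=
  ⟨fun s => ⟨psiVec n s, psiVec_mem n s⟩, (psiVec_cont n).subtype_mk _⟩

lemma psiMap_pt (n : ℕ) : psiMap n (wPt (bPt n)) = hawaiianPt n := by
  apply Subtype.ext
  change psiVec n _ = 0
  rw [psiVec_eq n _ 0 (fun _ _ => rfl), psiTerm_zero]
  rfl

variable (n : ℕ) (R : ∀ i : ℕ, C(↥(hawaiian n), ↥(Ysub n (i+1))))

/-- The projection to one sphere. -/
def rho : ℕ → ↥(hawaiian n) → EuclideanSpace ℝ (Fin (n+1))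
  | 0, z => (R 0 z : EuclideanSpace ℝ (Fin (n+1)))
  | j + 1, z => (R (j+1) z : EuclideanSpace ℝ (Fin (n+1))) - (R j z)

lemma rho_cont (j : ℕ) : Continuous (rho n R j) := by
  cases j with
  | zero => exact continuous_subtype_val.comp (R 0).continuous
  | succ j =>
    have h1 := continuous_subtype_val.comp (R (j+1)).continuous
    have h2 := continuous_subtype_val.comp (R j).continuous
    exact h1.sub h2

lemma haw_cases (z : ↥(hawaiian n)) : ∃ k : ℕ,
    (z : EuclideanSpace ℝ (Fin (n+1))) ∈ hawSphere n (k+1) := by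
  obtain ⟨z, hz⟩ := z
  unfold hawaiian at hz
  simp only [Set.mem_iUnion] at hz
  obtain ⟨j, hj, hz⟩ := hz
  obtain ⟨k, rfl⟩ := Nat.exists_eq_add_of_le' hj
  exact ⟨k, hz⟩

lemma rho_val (hval : ∀ (i k : ℕ) (z : ↥(hawaiian n)),
    (z : EuclideanSpace ℝ (Fin (n+1))) ∈ hawSphere n (k+1) →
    (R i z : EuclideanSpace ℝ (Fin (n+1))) =
      if k ≤ i then (z : EuclideanSpace ℝ (Fin (n+1))) else 0)
    (j k : ℕ) (z : ↥(hawaiian n))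
    (hz : (z : EuclideanSpace ℝ (Fin (n+1))) ∈ hawSphere n (k+1)) :
    rho n R j z = if j = k then (z : EuclideanSpace ℝ (Fin (n+1))) else 0 := by
  cases j with
  | zero =>
    change (R 0 z : EuclideanSpace ℝ (Fin (n+1))) = _
    rw [hval 0 k z hz]
    congr 1
    apply propext; omega
  | succ j =>
    change (R (j+1) z : EuclideanSpace ℝ (Fin (n+1))) - (R j z) = _
    rw [hval (j+1) k z hz, hval j k z hz]
    by_cases h1 : k ≤ j
    · rw [if_pos h1, if_pos (by omega), if_neg (by omega), sub_self]
    · rw [if_neg h1, sub_zero]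
      congr 1
      apply propext; omega

lemma phi_exists (hval : ∀ (i k : ℕ) (z : ↥(hawaiian n)),
    (z : EuclideanSpace ℝ (Fin (n+1))) ∈ hawSphere n (k+1) →
    (R i z : EuclideanSpace ℝ (Fin (n+1))) =
      if k ≤ i then (z : EuclideanSpace ℝ (Fin (n+1))) else 0) :
    ∃ Φ : C(↥(hawaiian n), Wed (bPt n)), ∀ (z : ↥(hawaiian n)) (j : ℕ),
      ((Φ z).1 j : EuclideanSpace ℝ (Fin (n+1))) = ((j:ℝ)+1) • rho n R j z - eVec n := by
  have hmem : ∀ (z : ↥(hawaiian n)) (j : ℕ), ((j:ℝ)+1) • rho n R j z - eVec n ∈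
      Metric.sphere (0 : EuclideanSpace ℝ (Fin (n+1))) 1 := by
    intro z j
    rw [mem_sphere_zero_iff_norm]
    obtain ⟨k, hk⟩ := haw_cases n z
    rw [rho_val n R hval j k z hk]
    split_ifs with h
    · subst h; exact (mem_hawSphere_iff n j _).mp hk
    · rw [smul_zero, zero_sub, norm_neg, eVec_norm]
  have hw : ∀ (z : ↥(hawaiian n)) (j l : ℕ), j ≠ l →
      (⟨_, hmem z j⟩ : Metric.sphere (0 : EuclideanSpace ℝ (Fin (n+1))) 1) = bPt n ∨
      (⟨_, hmem z l⟩ : Metric.sphere (0 : EuclideanSpace ℝ (Fin (n+1))) 1) = bPt n := by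
    intro z j l hjl
    obtain ⟨k, hk⟩ := haw_cases n z
    have hne : ∀ i, i ≠ k →
        (⟨_, hmem z i⟩ : Metric.sphere (0 : EuclideanSpace ℝ (Fin (n+1))) 1) = bPt n := by
      intro i hi
      apply Subtype.ext
      change ((i:ℝ)+1) • rho n R i z - eVec n = - eVec n
      rw [rho_val n R hval i k z hk, if_neg hi, smul_zero, zero_sub]
    by_cases hj : j = k
    · right; exact hne l (by omega)
    · left; exact hne j hj
  refine ⟨⟨fun z => ⟨fun j => ⟨_, hmem z j⟩, hw z⟩, ?_⟩, fun z j => rfl⟩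
  refine Continuous.subtype_mk (continuous_pi fun j => ?_) _
  exact Continuous.subtype_mk (((continuous_const (y := (j:ℝ)+1)).smul (rho_cont n R j)).sub continuous_const) _

lemma psi_phi (hval : ∀ (i k : ℕ) (z : ↥(hawaiian n)),
    (z : EuclideanSpace ℝ (Fin (n+1))) ∈ hawSphere n (k+1) →
    (R i z : EuclideanSpace ℝ (Fin (n+1))) =
      if k ≤ i then (z : EuclideanSpace ℝ (Fin (n+1))) else 0)
    (Φ : C(↥(hawaiian n), Wed (bPt n))) (hΦ : ∀ (z : ↥(hawaiian n)) (j : ℕ),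
      ((Φ z).1 j : EuclideanSpace ℝ (Fin (n+1))) = ((j:ℝ)+1) • rho n R j z - eVec n)
    (z : ↥(hawaiian n)) : psiMap n (Φ z) = z := by
  apply Subtype.ext
  change psiVec n (Φ z) = z
  obtain ⟨k, hk⟩ := haw_cases n z
  have hkp : (0:ℝ) < (k:ℝ) + 1 := by positivity
  rw [psiVec_eq n _ k]
  · unfold psiTerm
    rw [hΦ, rho_val n R hval k k z hk, if_pos rfl, sub_add_cancel, smul_smul,
      inv_mul_cancel₀ hkp.ne', one_smul]
  · intro j hj
    apply Subtype.ext
    rw [hΦ, rho_val n R hval j k z hk, if_neg hj, smul_zero, zero_sub]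
    rfl

lemma Ysub_subset (i : ℕ) : Ysub n i ⊆ hawaiian n := by
  intro z hz
  unfold Ysub at hz
  simp only [Set.mem_iUnion] at hz
  obtain ⟨j, hj, hz⟩ := hz
  exact Set.mem_biUnion (show j ∈ {j : ℕ | 1 ≤ j} from (Finset.mem_Icc.mp hj).1) hz

/-- The inclusion of a finite union of spheres. -/
def incl (i : ℕ) : C(↥(Ysub n (i+1)), ↥(hawaiian n)) :=
  ⟨fun z => ⟨z, Ysub_subset n _ z.2⟩, continuous_subtype_val.subtype_mk _⟩

lemma rho_incl (hval : ∀ (i k : ℕ) (z : ↥(hawaiian n)),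
    (z : EuclideanSpace ℝ (Fin (n+1))) ∈ hawSphere n (k+1) →
    (R i z : EuclideanSpace ℝ (Fin (n+1))) =
      if k ≤ i then (z : EuclideanSpace ℝ (Fin (n+1))) else 0)
    (j : ℕ) (z : ↥(hawaiian n)) : rho n R j (incl n j (R j z)) = rho n R j z := by
  obtain ⟨k, hk⟩ := haw_cases n z
  have h := hval j k z hk
  by_cases hkj : k ≤ j
  · rw [if_pos hkj] at h
    congr 1
    exact Subtype.ext h
  · rw [if_neg hkj] at h
    have h1 : ((incl n j (R j z) : ↥(hawaiian n)) : EuclideanSpace ℝ (Fin (n+1))) = 0 := h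
    have h2 := rho_val n R hval j k (incl n j (R j z)) (by rw [h1]; exact zero_mem_hawSphere n _)
    rw [h2, rho_val n R hval j k z hk, if_neg (by omega), if_neg (by omega)]

end Earring

lemma piInduced_comp {N X Y Z : Type} [TopologicalSpace X] [TopologicalSpace Y]
    [TopologicalSpace Z] {x : X} {y : Y} {z : Z} (φ : C(X, Y)) (hφ : φ x = y)
    (ψ : C(Y, Z)) (hψ : ψ y = z) (χ : C(X, Z)) (hχ : χ x = z) (h : ∀ a, ψ (φ a) = χ a)
    (γ : HomotopyGroup N X x) :
    piInduced N ψ hψ (piInduced N φ hφ γ) = piInduced N χ hχ γ := by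
  induction γ using Quotient.inductionOn with
  | _ f =>
    change Quotient.mk _ _ = Quotient.mk _ _
    congr 1
    apply GenLoop.ext
    intro t
    exact h (f t)

lemma piInduced_id {N X : Type} [TopologicalSpace X] {x : X}
    (γ : HomotopyGroup N X x) : piInduced N (ContinuousMap.id X) (y := x) rfl γ = γ := by
  induction γ using Quotient.inductionOn with
  | _ f => rfl

/-- For `n = m+2 ≥ 2`, the natural homomorphism
`β_n : π_n(ℋ_n, 0) → ∏_{i ≥ 1} π_n(Y_i^{(n)}, 0)`, `γ ↦ ((R_i)_*(γ))_i`, is injective;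
here `R i` is the retraction `ℋ_n → Y_{i+1}^{(n)}` fixing `Y_{i+1}^{(n)}` pointwise and
collapsing all spheres `S_j^n` with `j > i+1` to the origin. -/
theorem beta_injective (m : ℕ)
    (R : ∀ i : ℕ, C(↥(hawaiian (m+2)), ↥(Ysub (m+2) (i+1))))
    (hRfix : ∀ (i : ℕ) (z : ↥(hawaiian (m+2))),
      (z : EuclideanSpace ℝ (Fin (m+3))) ∈ Ysub (m+2) (i+1) →
      ((R i z : ↥(Ysub (m+2) (i+1))) : EuclideanSpace ℝ (Fin (m+3))) = z)
    (hRcoll : ∀ (i j : ℕ), i + 1 < j → ∀ z : ↥(hawaiian (m+2)),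
      (z : EuclideanSpace ℝ (Fin (m+3))) ∈ hawSphere (m+2) j →
      ((R i z : ↥(Ysub (m+2) (i+1))) : EuclideanSpace ℝ (Fin (m+3))) = 0)
    (hR0 : ∀ i : ℕ, R i (hawaiianPt (m+2)) = YsubPt (m+2) i)
    :
    Function.Injective
      (fun γ : HomotopyGroup (Fin (m+2)) (hawaiian (m+2)) (hawaiianPt (m+2)) =>
        fun i : ℕ => piInduced (Fin (m+2)) (R i) (hR0 i) γ) := by
  have hval : ∀ (i k : ℕ) (z : ↥(hawaiian (m+2))),
      (z : EuclideanSpace ℝ (Fin (m+2+1))) ∈ hawSphere (m+2) (k+1) →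
      (R i z : EuclideanSpace ℝ (Fin (m+2+1))) =
        if k ≤ i then (z : EuclideanSpace ℝ (Fin (m+2+1))) else 0 := by
    intro i k z hz
    split_ifs with h
    · exact hRfix i z (Set.mem_biUnion (Finset.mem_Icc.mpr ⟨by omega, by omega⟩) hz)
    · exact hRcoll i (k+1) (by omega) z hz
  obtain ⟨Φ, hΦ⟩ := phi_exists (m+2) R hval
  have hΦ0 : Φ (hawaiianPt (m+2)) = wPt (bPt (m+2)) := by
    apply Subtype.ext
    funext j
    apply Subtype.ext
    have hz : ((hawaiianPt (m+2) : ↥(hawaiian (m+2))) : EuclideanSpace ℝ (Fin (m+2+1))) ∈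
        hawSphere (m+2) (j+1+1) := zero_mem_hawSphere _ _
    rw [hΦ, rho_val (m+2) R hval j (j+1) _ hz, if_neg (by omega), smul_zero, zero_sub]
    rfl
  intro γ γ' hγ
  have hc : ∀ (j : ℕ) (δ : HomotopyGroup (Fin (m+2)) (hawaiian (m+2)) (hawaiianPt (m+2))),
      piInduced (Fin (m+2)) (wCoord (bPt (m+2)) j) (y := bPt (m+2)) rfl
        (piInduced (Fin (m+2)) Φ hΦ0 δ) =
      piInduced (Fin (m+2)) (((wCoord (bPt (m+2)) j).comp Φ).comp (incl (m+2) j))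
        (y := bPt (m+2)) (congrArg (fun w : Wed (bPt (m+2)) => w.1 j) hΦ0)
        (piInduced (Fin (m+2)) (R j) (hR0 j) δ) := by
    intro j δ
    refine (piInduced_comp Φ hΦ0 (wCoord (bPt (m+2)) j) (z := bPt (m+2)) rfl
      ((wCoord (bPt (m+2)) j).comp Φ)
      (congrArg (fun w : Wed (bPt (m+2)) => w.1 j) hΦ0) (fun _ => rfl) δ).trans ?_
    refine (piInduced_comp _ _ _ _ _ _ ?_ _).symm
    intro a
    apply Subtype.ext
    change ((Φ (incl (m+2) j (R j a))).1 j : EuclideanSpace ℝ (Fin (m+2+1))) = (Φ a).1 j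
    rw [hΦ, hΦ, rho_incl (m+2) R hval]
  have hΦγ : piInduced (Fin (m+2)) Φ hΦ0 γ = piInduced (Fin (m+2)) Φ hΦ0 γ' := by
    refine wedge_inj m (finrank_euclideanSpace_fin) (eVec (m+2)) (eVec_norm (m+2))
      (bPt (m+2)) rfl _ _ ?_
    intro j
    exact (hc j γ).trans ((congrArg _ (congrFun hγ j)).trans (hc j γ').symm)
  have hback : ∀ δ : HomotopyGroup (Fin (m+2)) (hawaiian (m+2)) (hawaiianPt (m+2)),
      piInduced (Fin (m+2)) (psiMap (m+2)) (psiMap_pt (m+2))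
        (piInduced (Fin (m+2)) Φ hΦ0 δ) = δ := by
    intro δ
    rw [piInduced_comp Φ hΦ0 (psiMap (m+2)) (psiMap_pt (m+2)) (ContinuousMap.id _) rfl
      (psi_phi (m+2) R hval Φ hΦ), piInduced_id]
  rw [← hback γ, hΦγ, hback]
end
end
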